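/- arXiv:2002.11366 — 13 statements merged into one kernel-verified Lean document; each statement's English description precedes it below -/
import Mathlib

section
/- Let p be a prime with p > 3 and p ≡ 3 (mod 4), and let n be a positive integer with pn ≡ ±1 (mod 5). Then the only positive integers x, y, z satisfying (5pn² − 1)^x + (p(p−5)n² + 1)^y = (pn)^z are (x, y, z) = (1, 1, 2). -/
/-- Descent in the order generated by `√A` and `√-B`, where `A + B = C ^ 2`. -/
lemma descent_aux (A B C : ℤ) (hC : 1 < C) (hA : C < A) (hB : C < B) (hABC : A + B = C ^ 2)
    (hco : IsCoprime A C) (h2 : IsCoprime 2 C) (z : ℕ) :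
    (∀ X Y : ℤ, A * X ^ 2 + B * Y ^ 2 = C ^ z → IsCoprime (X + Y) C →
      ∃ (t : ℕ) (ε : ℤ), z = 2 * t ∧ Odd t ∧ (ε = 1 ∨ ε = -1) ∧
        ∀ a b : ℂ, a ^ 2 = A → b ^ 2 = -B → X * a + Y * b = ε * (a + b) ^ t) ∧
    (∀ U V : ℤ, U ^ 2 + A * B * V ^ 2 = C ^ z → IsCoprime (U + A * V) C →
      ∃ (t : ℕ) (ε : ℤ), z = 2 * t ∧ Even t ∧ (ε = 1 ∨ ε = -1) ∧
        ∀ a b : ℂ, a ^ 2 = A → b ^ 2 = -B → U + V * (a * b) = ε * (a + b) ^ t) := by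
  have hA0 : 0 < A := by linarith
  have hB0 : 0 < B := by linarith
  have small1 : ∀ X Y : ℤ, A * X ^ 2 + B * Y ^ 2 ≤ C → X = 0 ∧ Y = 0 := by
    intro X Y h
    constructor
    · by_contra hX
      have : 0 < X ^ 2 := by positivity
      nlinarith [mul_nonneg hB0.le (sq_nonneg Y)]
    · by_contra hX
      have : 0 < Y ^ 2 := by positivity
      nlinarith [mul_nonneg hA0.le (sq_nonneg X)]
  have small2 : ∀ U V : ℤ, U ^ 2 + A * B * V ^ 2 ≤ C → V = 0 := by
    intro U V h
    by_contra hX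
    have : 0 < V ^ 2 := by positivity
    have h1 : C < A * B := by nlinarith
    nlinarith [sq_nonneg U]
  induction z using Nat.strong_induction_on with
  | _ z ih =>
    rcases Nat.lt_or_ge z 2 with hz | hz
    · have hle : C ^ z ≤ C := by interval_cases z <;> simp <;> linarith
      constructor
      · intro X Y h _
        obtain ⟨rfl, rfl⟩ := small1 X Y (h ▸ hle)
        have : 0 < C ^ z := by positivity
        simp at h
        omega
      · intro U V h hc
        obtain rfl := small2 U V (h ▸ hle)
        simp at h hc
        interval_cases z
        · refine ⟨0, U, rfl, by decide, ?_, ?_⟩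
          · simpa using h
          · intros; simp
        · exfalso
          rw [pow_one] at h
          have h3 : IsCoprime U U := by
            rw [← h, sq] at hc
            exact hc.of_mul_right_left
          have h4 : IsUnit U := isCoprime_self.mp h3
          rcases Int.isUnit_iff.mp h4 with h | h <;> subst h <;> norm_num at h <;> omega
    · obtain ⟨w, rfl⟩ : ∃ w, z = w + 2 := ⟨z - 2, by omega⟩
      obtain ⟨ih1, ih2⟩ := ih w (by omega)
      have hC2 : C ^ 2 ≠ 0 := by positivity
      constructor
      · intro X Y h hc
        have hd : C ^ 2 ∣ (A * (X + Y)) * (Y - X) := by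
          refine ⟨Y ^ 2 - C ^ w, ?_⟩
          rw [pow_add] at h
          linear_combination -h + Y ^ 2 * hABC
        have hd2 : C ^ 2 ∣ Y - X :=
          ((hco.mul_left hc).symm.pow_left).dvd_of_dvd_mul_left hd
        obtain ⟨V, hV⟩ := hd2
        have hY : Y = X + C ^ 2 * V := by linarith
        have hcy : IsCoprime Y C := by
          have h5 : IsCoprime (2 * Y) C := by
            have h6 : 2 * Y = X + Y + C * (C * V) := by rw [hY]; ring
            rw [h6]; exact hc.add_mul_left_left _
          exact h5.of_mul_left_right
        obtain ⟨t, ε, ht, hte, hε, hab⟩ := ih2 (X + B * V) V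
          (by
            apply mul_right_cancel₀ hC2
            rw [← pow_add, ← h, hY]
            have hA' : A = C ^ 2 - B := by linarith
            rw [hA']; ring)
          (by
            have : X + B * V + A * V = Y := by rw [hY, ← hABC]; ring
            rwa [this])
        refine ⟨t + 1, ε, by omega, hte.add_one, hε, ?_⟩
        intro a b ha hb
        rw [pow_succ, ← mul_assoc, ← hab a b ha hb, hY]
        have hC' : (C : ℂ) ^ 2 = A + B := by exact_mod_cast hABC.symm
        push_cast
        linear_combination (V * b) * hC' - V * b * ha - V * a * hb
      · intro U V h hc
        have hd : C ^ 2 ∣ (U + A * V) * (A * V - U) := by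
          refine ⟨A * V ^ 2 - C ^ w, ?_⟩
          rw [pow_add] at h
          linear_combination -h + A * V ^ 2 * hABC
        have hd2 : C ^ 2 ∣ A * V - U := (hc.symm.pow_left).dvd_of_dvd_mul_left hd
        obtain ⟨Y, hY⟩ := hd2
        have hU : U = A * V - C ^ 2 * Y := by linarith
        have hcv : IsCoprime V C := by
          have h5 : IsCoprime (2 * A * V) C := by
            have h6 : 2 * A * V = U + A * V + C * (C * Y) := by rw [hU]; ring
            rw [h6]; exact hc.add_mul_left_left _
          exact h5.of_mul_left_right
        obtain ⟨t, ε, ht, hte, hε, hab⟩ := ih1 (V - Y) Y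
          (by
            apply mul_right_cancel₀ hC2
            rw [← pow_add, ← h, hU]
            have hB' : B = C ^ 2 - A := by linarith
            rw [hB']; ring)
          (by simpa using hcv)
        refine ⟨t + 1, ε, by omega, hte.add_one, hε, ?_⟩
        intro a b ha hb
        rw [pow_succ, ← mul_assoc (ε : ℂ), ← hab a b ha hb, hU]
        have hC' : (C : ℂ) ^ 2 = A + B := by exact_mod_cast hABC.symm
        push_cast
        linear_combination (-Y) * hC' - (V - Y) * ha - Y * hb

lemma sum_even_odd_aux (f : ℕ → ℂ) (N : ℕ) :
    ∑ m ∈ Finset.range (2 * N), f m = ∑ i ∈ Finset.range N, (f (2 * i) + f (2 * i + 1)) := by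
  induction N with
  | zero => simp
  | succ N ih =>
    rw [Finset.sum_range_succ, ← ih, show 2 * (N + 1) = 2 * N + 1 + 1 by ring,
      Finset.sum_range_succ, Finset.sum_range_succ, add_assoc]

lemma expand_aux (A B : ℤ) (k : ℕ) : ∃ P : ℂ, ∀ a b : ℂ, a ^ 2 = A → b ^ 2 = -B →
    (a + b) ^ (2 * k + 1) = a * P +
      b * ((∑ i ∈ Finset.range (k + 1),
        ((2 * k + 1).choose (2 * i + 1) : ℤ) * A ^ (k - i) * (-B) ^ i : ℤ) : ℂ) := by
  refine ⟨∑ i ∈ Finset.range (k + 1),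
        ((2 * k + 1).choose (2 * i) : ℂ) * A ^ (k - i) * (-B) ^ i, ?_⟩
  intro a b ha hb
  rw [add_comm a b, add_pow, show 2 * k + 1 + 1 = 2 * (k + 1) by ring, sum_even_odd_aux]
  push_cast
  rw [Finset.mul_sum, Finset.mul_sum, ← Finset.sum_add_distrib]
  apply Finset.sum_congr rfl
  intro i hi
  obtain ⟨l, rfl⟩ : ∃ l, k = i + l := ⟨k - i, by have := Finset.mem_range.mp hi; omega⟩
  rw [show 2 * (i + l) + 1 - 2 * i = 2 * l + 1 by omega,
    show 2 * (i + l) - 2 * i = 2 * l by omega, show i + l - i = l by omega,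
    ← ha, ← hb]
  ring

lemma choose_dvd_aux (B q g e t i : ℕ) (hq : q.Prime) (hg : q ^ g ∣ B) (h5 : 5 ≤ q ^ g)
    (he : q ^ e ∣ t) (hi : 1 ≤ i) : q ^ (e + 1) ∣ t.choose (2 * i + 1) * B ^ i := by
  rcases Nat.eq_zero_or_pos t with rfl | ht
  · simp
  obtain ⟨s, rfl⟩ : ∃ s, t = s + 1 := ⟨t - 1, by omega⟩
  obtain ⟨r, m, hm, hrm⟩ := Nat.exists_eq_pow_mul_and_not_dvd (n := 2 * i + 1) (by omega) q hq.ne_one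
  have h5i : 2 * i + 1 < 5 ^ i := by
    clear hrm
    induction i, hi using Nat.le_induction with
    | base => norm_num
    | succ i hi ih => rw [pow_succ]; omega
  have hr : r < g * i := by
    have h1 : q ^ r ≤ 2 * i + 1 := Nat.le_of_dvd (by omega) ⟨m, hrm⟩
    have h2 : 5 ^ i ≤ q ^ (g * i) := by rw [pow_mul]; exact Nat.pow_le_pow_left h5 i
    exact (Nat.pow_lt_pow_iff_right hq.one_lt).mp (by omega)
  have hch := Nat.add_one_mul_choose_eq s (2 * i)
  have hB : q ^ (g * i) ∣ B ^ i := by rw [pow_mul]; exact pow_dvd_pow_of_dvd hg i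
  have h1 : q ^ r * q ^ (e + 1) ∣ q ^ r * (m * ((s + 1).choose (2 * i + 1) * B ^ i)) := by
    have h2 : q ^ r * (m * ((s + 1).choose (2 * i + 1) * B ^ i))
        = (s + 1) * s.choose (2 * i) * B ^ i := by
      rw [hch]
      calc _ = (q ^ r * m) * ((s + 1).choose (2 * i + 1) * B ^ i) := by ring
        _ = _ := by rw [← hrm]; ring
    rw [h2]
    have h3 : q ^ e * q ^ (g * i) ∣ (s + 1) * s.choose (2 * i) * B ^ i :=
      mul_dvd_mul (Dvd.dvd.mul_right he _) hB
    refine dvd_trans ?_ h3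
    rw [← pow_add, ← pow_add]
    exact pow_dvd_pow _ (by omega)
  have h4 := Nat.dvd_of_mul_dvd_mul_left (pow_pos hq.pos r) h1
  have h6 : Nat.Coprime (q ^ (e + 1)) m :=
    Nat.Coprime.pow_left _ ((Nat.Prime.coprime_iff_not_dvd hq).mpr hm)
  exact h6.dvd_of_dvd_mul_left h4

lemma val_aux (A B q g k j : ℕ) (hq : q.Prime) (hg : q ^ g ∣ B) (h5 : 5 ≤ q ^ g)
    (hA : ¬ q ∣ A)
    (hS : ((q ^ j : ℕ) : ℤ) ∣ ∑ i ∈ Finset.range (k + 1),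
        ((2 * k + 1).choose (2 * i + 1) : ℤ) * (A : ℤ) ^ (k - i) * (-(B : ℤ)) ^ i) :
    q ^ j ∣ 2 * k + 1 := by
  have main : ∀ e, e ≤ j → q ^ e ∣ 2 * k + 1 := by
    intro e
    induction e with
    | zero => simp
    | succ e ih =>
      intro hej
      have he := ih (by omega)
      have hS' := dvd_trans (Int.natCast_dvd_natCast.mpr (pow_dvd_pow q hej)) hS
      rw [Finset.sum_range_succ'] at hS'
      have hrest : ((q ^ (e + 1) : ℕ) : ℤ) ∣ ∑ i ∈ Finset.range k,
          ((2 * k + 1).choose (2 * (i + 1) + 1) : ℤ) * (A : ℤ) ^ (k - (i + 1)) *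
            (-(B : ℤ)) ^ (i + 1) := by
        apply Finset.dvd_sum
        intro i _
        have h1 := Int.natCast_dvd_natCast.mpr
          (choose_dvd_aux B q g e (2 * k + 1) (i + 1) hq hg h5 he (by omega))
        rw [Nat.cast_mul, Nat.cast_pow B] at h1
        rw [neg_pow]
        refine dvd_trans h1 ⟨(A : ℤ) ^ (k - (i + 1)) * (-1) ^ (i + 1), by ring⟩
      have h2 := (dvd_add_right hrest).mp hS'
      simp only [mul_zero, zero_add, Nat.choose_one_right, Nat.sub_zero, pow_zero, mul_one] at h2
      have h3 : q ^ (e + 1) ∣ (2 * k + 1) * A ^ k := by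
        apply Int.natCast_dvd_natCast.mp
        simpa using h2
      have h4 : Nat.Coprime (q ^ (e + 1)) (A ^ k) :=
        Nat.Coprime.pow _ _ ((Nat.Prime.coprime_iff_not_dvd hq).mpr hA)
      exact h4.dvd_of_dvd_mul_right h3
  exact main j le_rfl

lemma exists_prime_aux (B : ℕ) (hB : 5 ≤ B) (hodd : B % 2 = 1) :
    ∃ q g, q.Prime ∧ 3 ≤ q ∧ q ∣ B ∧ q ^ g ∣ B ∧ 5 ≤ q ^ g := by
  have hq2 : ∀ q, q.Prime → q ∣ B → 3 ≤ q := by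
    intro q hq hd
    have := hq.two_le
    rcases Nat.lt_or_ge q 3 with h | h
    · obtain rfl : q = 2 := by omega
      omega
    · exact h
  by_cases h : ∃ q, q.Prime ∧ q ∣ B ∧ 5 ≤ q
  · obtain ⟨q, hq, hd, h5⟩ := h
    exact ⟨q, 1, hq, by omega, hd, by simpa using hd, by simpa using h5⟩
  · push Not at h
    have h3 : ∀ {d : ℕ}, d.Prime → d ∣ B → d = 3 := by
      intro d hd hdB
      have h1 := hq2 d hd hdB
      have h2 := h d hd hdB
      interval_cases d
      · rfl
      · norm_num at hd
    have := Nat.eq_prime_pow_of_unique_prime_dvd (by omega : B ≠ 0) h3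
    refine ⟨3, B.primeFactorsList.length, Nat.prime_three, le_rfl, ?_, this ▸ dvd_rfl, this ▸ hB⟩
    obtain ⟨q, hq, hd⟩ := Nat.exists_prime_and_dvd (show B ≠ 1 by omega)
    exact h3 hq hd ▸ hd

/-- The case `x = 1`. -/
lemma pillai_aux (A B C j z : ℕ) (hC : 1 < C) (hA : C < A) (hB : C < B) (hABC : A + B = C ^ 2)
    (hB1 : C ∣ B - 1) (hCo : C % 2 = 1) (hBo : B % 2 = 1) (hB5 : 5 ≤ B) (hco : Nat.Coprime A C)
    (hj : 2 ≤ j) (h : A + B ^ (2 * j + 1) = C ^ z) : False := by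
  have hZ : (A : ℤ) + B = (C : ℤ) ^ 2 := by exact_mod_cast hABC
  have h2C : IsCoprime (2 : ℤ) C := by
    have : Nat.Coprime 2 C := (Nat.coprime_two_left).mpr (Nat.odd_iff.mpr hCo)
    exact_mod_cast Nat.isCoprime_iff_coprime.mpr this
  have hBj : ∃ m : ℤ, (B : ℤ) ^ j = 1 + C * m := by
    have h1 : (C : ℤ) ∣ (B : ℤ) - 1 := by
      have := Int.natCast_dvd_natCast.mpr hB1
      rwa [Nat.cast_sub (by omega), Nat.cast_one] at this
    obtain ⟨m, hm⟩ := dvd_trans h1 (by simpa using sub_dvd_pow_sub_pow (B : ℤ) 1 j)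
    exact ⟨m, by linarith⟩
  obtain ⟨m, hm⟩ := hBj
  obtain ⟨t, ε, hzt, hto, hε, hab⟩ := (descent_aux A B C (by exact_mod_cast hC)
    (by exact_mod_cast hA) (by exact_mod_cast hB) hZ
    (Nat.isCoprime_iff_coprime.mpr hco) h2C z).1 1 ((B : ℤ) ^ j)
    (by
      have : (A : ℤ) + (B : ℤ) ^ (2 * j + 1) = (C : ℤ) ^ z := by exact_mod_cast h
      rw [← this]; ring)
    (by
      rw [hm, show (1 : ℤ) + (1 + C * m) = 2 + C * m by ring]
      exact h2C.add_mul_left_left _)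
  obtain ⟨k, rfl⟩ := hto
  obtain ⟨P, hP⟩ := expand_aux A B k
  set S : ℤ := ∑ i ∈ Finset.range (k + 1),
        ((2 * k + 1).choose (2 * i + 1) : ℤ) * (A : ℤ) ^ (k - i) * (-(B : ℤ)) ^ i with hS
  obtain ⟨a, ha⟩ := IsAlgClosed.exists_pow_nat_eq ((A : ℤ) : ℂ) (n := 2) (by norm_num)
  obtain ⟨b, hb⟩ := IsAlgClosed.exists_pow_nat_eq (-((B : ℤ) : ℂ)) (n := 2) (by norm_num)
  have hb' : (-b) ^ 2 = -((B : ℤ) : ℂ) := by rw [neg_sq, hb]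
  have hb0 : b ≠ 0 := by
    rintro rfl
    have : ((B : ℤ) : ℂ) = 0 := by
      have h0 : (0 : ℂ) ^ 2 = 0 := by norm_num
      rw [h0] at hb
      linear_combination hb
    have : B = 0 := by exact_mod_cast this
    omega
  have e1 := hab a b ha hb
  have e2 := hab a (-b) ha hb'
  rw [hP a b ha hb] at e1
  rw [hP a (-b) ha hb'] at e2
  have e3 : (((B : ℤ) ^ j : ℤ) : ℂ) = ((ε * S : ℤ) : ℂ) := by
    apply mul_right_cancel₀ hb0
    rw [Int.cast_mul]
    linear_combination (e1 - e2) / 2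
  have e4 : (B : ℤ) ^ j = ε * S := by exact_mod_cast e3
  have e5 : (B : ℤ) ^ j ∣ S := by
    rcases hε with rfl | rfl
    · exact ⟨1, by linarith⟩
    · exact ⟨-1, by linarith⟩
  obtain ⟨q, g, hq, hq3, hqB, hg, hg5⟩ := exists_prime_aux B hB5 hBo
  have hqA : ¬ q ∣ A := by
    intro hqA
    have h1 : q ∣ C ^ 2 := hABC ▸ dvd_add hqA hqB
    have h2 := hq.dvd_of_dvd_pow h1
    exact hq.one_lt.ne' (Nat.eq_one_of_dvd_coprimes hco hqA h2)
  have hdv := val_aux A B q g k j hq hg hg5 hqA (by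
    refine dvd_trans ?_ e5
    have := Int.natCast_dvd_natCast.mpr (pow_dvd_pow_of_dvd hqB j)
    simpa using this)
  have hle := Nat.le_of_dvd (by omega) hdv
  have hle2 : 3 ^ j ≤ q ^ j := Nat.pow_le_pow_left hq3 j
  have hkj : 2 * k + 1 ≤ 2 * j + 1 := by
    have h1 : C ^ z ≤ (C ^ 2) ^ (2 * j + 1) := by
      rw [← h, ← hABC]
      calc A + B ^ (2 * j + 1) ≤ A ^ (2 * j + 1) + B ^ (2 * j + 1) := by
            gcongr
            exact Nat.le_self_pow (by omega) A
        _ ≤ (A + B) ^ (2 * j + 1) := pow_add_pow_le (Nat.zero_le A) (Nat.zero_le B) (by omega)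
    rw [← pow_mul] at h1
    have := (Nat.pow_le_pow_iff_right hC).mp h1
    omega
  have h3 : 2 * j + 1 < 3 ^ j := by
    clear * - hj
    induction j, hj using Nat.le_induction with
    | base => norm_num
    | succ i hi ih => rw [pow_succ]; omega
  omega

theorem stmt_0 (p n : ℕ) (hp : p.Prime) (hp3 : 3 < p) (hp4 : p % 4 = 3)
    (hn : 0 < n) (h5 : p * n % 5 = 1 ∨ p * n % 5 = 4)
    (x y z : ℕ) (hx : 0 < x) (hy : 0 < y) (hz : 0 < z)
    (heq : (5 * p * n ^ 2 - 1) ^ x + (p * (p - 5) * n ^ 2 + 1) ^ y = (p * n) ^ z) :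
    x = 1 ∧ y = 1 ∧ z = 2 := by
  obtain ⟨d, rfl⟩ : ∃ d, p = d + 5 := ⟨p - 5, by omega⟩
  have hd : 2 ≤ d := by omega
  rw [Nat.add_sub_cancel] at heq
  have hn2 : n ≤ n ^ 2 := Nat.le_self_pow (by norm_num) n
  have hN : 1 ≤ n ^ 2 := by omega
  obtain ⟨A, hAdef⟩ : ∃ A, A = 5 * (d + 5) * n ^ 2 - 1 := ⟨_, rfl⟩
  obtain ⟨B, hBdef⟩ : ∃ B, B = (d + 5) * d * n ^ 2 + 1 := ⟨_, rfl⟩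
  obtain ⟨C, hCdef⟩ : ∃ C, C = (d + 5) * n := ⟨_, rfl⟩
  rw [← hAdef, ← hBdef, ← hCdef] at heq
  rw [← hCdef] at h5
  have hA1 : A + 1 = 5 * (d + 5) * n ^ 2 := by
    have : 1 ≤ 5 * (d + 5) * n ^ 2 := Nat.one_le_iff_ne_zero.mpr (by positivity)
    omega
  have hABC : A + B = C ^ 2 := by
    rw [hBdef, ← add_assoc, add_right_comm, hA1, hCdef]; ring
  have hC7 : 7 ≤ C := by rw [hCdef]; nlinarith
  have hAC : C < A := by
    have : C + 1 < A + 1 := by rw [hA1, hCdef]; nlinarith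
    omega
  have hBC : C < B := by rw [hBdef, hCdef]; nlinarith
  -- small `z`
  rcases Nat.lt_or_ge z 3 with hz3 | hz3
  · have h1 : C ^ z ≤ C ^ 2 := Nat.pow_le_pow_right (by omega) (by omega)
    have hAx : A ≤ A ^ x := Nat.le_self_pow (by omega) A
    have hBy : B ≤ B ^ y := Nat.le_self_pow (by omega) B
    have e1 : A ^ x = A ^ 1 := by rw [pow_one]; omega
    have e2 : B ^ y = B ^ 1 := by rw [pow_one]; omega
    have e3 : C ^ z = C ^ 2 := by omega
    exact ⟨Nat.pow_right_injective (by omega) e1, Nat.pow_right_injective (by omega) e2,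
      Nat.pow_right_injective (by omega) e3⟩
  exfalso
  have heqZ : (A : ℤ) ^ x + (B : ℤ) ^ y = (C : ℤ) ^ z := by exact_mod_cast heq
  have hA1Z : (A : ℤ) + 1 = 5 * (d + 5) * n ^ 2 := by exact_mod_cast hA1
  have hBZ : (B : ℤ) = (d + 5) * d * n ^ 2 + 1 := by exact_mod_cast hBdef
  have hCZ : (C : ℤ) = (d + 5) * n := by exact_mod_cast hCdef
  have hBy1 : ∀ k, (B : ℤ) ^ k ≡ 1 [ZMOD C] := by
    intro k
    have : (B : ℤ) ≡ 1 [ZMOD C] := by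
      apply Int.ModEq.symm
      rw [Int.modEq_iff_dvd]
      exact ⟨d * n, by rw [hBZ, hCZ]; ring⟩
    simpa using this.pow k
  -- `x` is odd
  have hxo : Odd x := by
    by_contra hxe
    rw [Nat.not_odd_iff_even] at hxe
    have h1 : (A : ℤ) ≡ -1 [ZMOD C] := by
      apply Int.ModEq.symm
      rw [Int.modEq_iff_dvd]
      exact ⟨5 * n, by rw [sub_neg_eq_add, hA1Z, hCZ]; ring⟩
    have h2 := (h1.pow x).add (hBy1 y)
    rw [heqZ, hxe.neg_one_pow] at h2
    have h3 : (C : ℤ) ∣ C ^ z := dvd_pow_self _ (by omega)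
    have h4 : (C : ℤ) ∣ 1 + 1 := (Int.ModEq.dvd_iff h2).mp h3
    have := Int.le_of_dvd (by norm_num) h4
    omega
  obtain ⟨u, rfl⟩ := hxo
  -- `y ≡ 1 (mod 4)`
  have hy4 : y % 4 = 1 := by
    have hA5 : A % 5 = 4 := by
      have : (A + 1) % 5 = 0 := by rw [hA1, mul_assoc]; simp
      omega
    have hC5 : C ^ 2 % 5 = 1 := by
      rw [Nat.pow_mod]; rcases h5 with h | h <;> rw [h]
    have hB5 : B % 5 = 2 := by omega
    have e1 : A ^ (2 * u + 1) % 5 = 4 := by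
      rw [pow_succ, pow_mul, Nat.mul_mod, Nat.pow_mod, Nat.pow_mod A, hA5]; norm_num
    have e2 : C ^ z % 5 = 1 ∨ C ^ z % 5 = 4 := by
      rcases Nat.even_or_odd' z with ⟨w, rfl | rfl⟩
      · left; rw [pow_mul, Nat.pow_mod, hC5]; simp
      · rw [pow_succ, pow_mul, Nat.mul_mod, Nat.pow_mod, hC5]; simpa using h5
    have e3 : B ^ y % 5 = 2 ^ (y % 4) % 5 := by
      rw [Nat.pow_mod, hB5]
      conv_lhs => rw [← Nat.div_add_mod y 4, pow_add, pow_mul, Nat.mul_mod, Nat.pow_mod]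
      norm_num
    have h4 : y % 4 < 4 := Nat.mod_lt _ (by norm_num)
    have e4 : (A ^ (2 * u + 1) + B ^ y) % 5 = C ^ z % 5 := by rw [heq]
    rw [Nat.add_mod, e1, e3] at e4
    generalize y % 4 = r at *
    interval_cases r <;> simp at e4 <;> omega
  have hdo : d % 2 = 0 := by omega
  -- `n` is odd
  have hno : n % 2 = 1 := by
    by_contra hne
    obtain ⟨m, rfl⟩ : ∃ m, n = 2 * m := ⟨n / 2, by omega⟩
    obtain ⟨d', rfl⟩ : ∃ d', d = 2 * d' := ⟨d / 2, by omega⟩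
    push_cast at hA1Z hBZ hCZ
    have hm : (0 : ℤ) < m := by omega
    set M : ℤ := 8 * m ^ 2 with hM
    have b1 : (B : ℤ) ≡ 1 [ZMOD M] := by
      apply Int.ModEq.symm
      rw [Int.modEq_iff_dvd]
      exact ⟨(2 * d' + 5) * d', by rw [hBZ, hM]; ring⟩
    have a1 : (A : ℤ) ^ 2 ≡ 1 [ZMOD M] := by
      apply Int.ModEq.symm
      rw [Int.modEq_iff_dvd]
      refine ⟨50 * (2 * d' + 5) ^ 2 * m ^ 2 - 5 * (2 * d' + 5), ?_⟩
      rw [eq_sub_of_add_eq hA1Z, hM]; ring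
    have c1 : M ∣ (C : ℤ) ^ z := by
      refine dvd_trans ?_ (pow_dvd_pow (C : ℤ) hz3)
      exact ⟨(2 * d' + 5) ^ 3 * m, by rw [hCZ, hM]; ring⟩
    have s1 := ((a1.pow u).mul_right (A : ℤ)).add (b1.pow y)
    rw [← pow_mul, ← pow_succ, heqZ, one_pow, one_pow, one_mul, hA1Z] at s1
    obtain ⟨w, hw⟩ := (Int.ModEq.dvd_iff s1).mp c1
    have hm2 : (4 * (m : ℤ) ^ 2) ≠ 0 := by positivity
    have : 5 * (2 * (d' : ℤ) + 5) = 2 * w := by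
      apply mul_right_cancel₀ hm2
      rw [hM] at hw
      linarith
    omega
  have hsq4 : n ^ 2 % 4 = 1 := by
    rw [Nat.pow_mod]
    have : n % 4 = 1 ∨ n % 4 = 3 := by omega
    rcases this with h | h <;> rw [h]
  have hd4 : d % 4 = 2 := by omega
  have hB4 : B % 4 = 3 := by
    rw [hBdef, Nat.add_mod, Nat.mul_mod, Nat.mul_mod (d + 5), hp4, hsq4, hd4]
  have hA4 : A % 4 = 2 := by
    have : (A + 1) % 4 = 3 := by rw [hA1, Nat.mul_mod, Nat.mul_mod 5, hp4, hsq4]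
    omega
  have hCo : C % 2 = 1 := by
    rw [hCdef, Nat.mul_mod, hno]; omega
  have hyo : ∃ v, y = 2 * v + 1 := ⟨y / 2, by omega⟩
  have hBy4 : B ^ y % 4 = 3 := by
    obtain ⟨v, rfl⟩ := hyo
    rw [pow_succ, pow_mul, Nat.mul_mod, Nat.pow_mod, Nat.pow_mod B, hB4]; norm_num
  -- `x = 1`
  have hu : u = 0 := by
    by_contra hu
    have hAx : A ^ (2 * u + 1) % 4 = 0 := by
      obtain ⟨u', rfl⟩ : ∃ u', u = u' + 1 := ⟨u - 1, by omega⟩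
      rw [show 2 * (u' + 1) + 1 = 2 + (2 * u' + 1) by ring, pow_add, Nat.mul_mod, Nat.pow_mod, hA4]
      simp
    have hCz : C ^ z % 4 = 3 := by rw [← heq]; omega
    have hC4 : C % 4 = 3 := by
      by_contra hne
      have : C % 4 = 1 := by omega
      rw [Nat.pow_mod, this] at hCz
      simp at hCz
    have hzo : Odd z := by
      by_contra hze
      rw [Nat.not_odd_iff_even] at hze
      obtain ⟨w, rfl⟩ := hze
      rw [← two_mul, pow_mul, Nat.pow_mod, Nat.pow_mod C, hC4] at hCz
      simp at hCz
    have hJ1 : jacobiSym (C : ℤ) B = -1 := by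
      rw [jacobiSym.quadratic_reciprocity_three_mod_four hC4 hB4]
      have : jacobiSym (B : ℤ) C = jacobiSym 1 C := by
        apply jacobiSym.mod_left'
        have := hBy1 1
        rwa [pow_one] at this
      rw [this, jacobiSym.one_left]
    have hJ2 : jacobiSym ((C : ℤ) ^ z) B = jacobiSym (((C : ℤ) ^ 2) ^ (2 * u + 1)) B := by
      apply jacobiSym.mod_left'
      have h1 : (A : ℤ) ≡ (C : ℤ) ^ 2 [ZMOD B] := by
        rw [Int.modEq_iff_dvd]
        exact ⟨1, by
          have : (A : ℤ) + B = (C : ℤ) ^ 2 := by exact_mod_cast hABC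
          linarith⟩
      have h2 : (C : ℤ) ^ z ≡ (A : ℤ) ^ (2 * u + 1) [ZMOD B] := by
        apply Int.ModEq.symm
        rw [Int.modEq_iff_dvd, ← heqZ]
        rw [add_sub_cancel_left]
        exact dvd_pow_self _ (by omega)
      exact h2.trans (h1.pow _)
    rw [← pow_mul, jacobiSym.pow_left, jacobiSym.pow_left, hJ1, hzo.neg_one_pow, pow_mul] at hJ2
    norm_num at hJ2
  subst hu
  obtain ⟨j, rfl⟩ := hyo
  rw [mul_zero, zero_add, pow_one] at heq
  rcases Nat.eq_zero_or_pos j with rfl | hj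
  · rw [mul_zero, zero_add, pow_one, hABC] at heq
    have := Nat.pow_right_injective (by omega : 2 ≤ C) heq
    omega
  · refine pillai_aux A B C j z (by omega) hAC hBC hABC ?_ hCo (by omega) (by omega) ?_
      (by omega) heq
    · rw [hBdef, Nat.add_sub_cancel, hCdef]
      exact ⟨d * n, by ring⟩
    · have h1 : IsCoprime (A : ℤ) C := by
        refine ⟨-1, 5 * n, ?_⟩
        rw [eq_sub_of_add_eq hA1Z, hCZ]; ring
      exact Nat.isCoprime_iff_coprime.mp h1
end

section
/- Let n be a positive integer with n ≡ 3 (mod 5), or n ≡ 2 (mod 5), or 5 ∣ n. Then the only positive integers x, y, z satisfying (35n² − 1)^x + (14n² + 1)^y = (7n)^z are (x, y, z) = (1, 1, 2). -/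
lemma one_add_pow_aux (u c : ℤ) (k : ℕ) : u^2 ∣ (1 + c*u)^k - 1 - k*c*u := by
  induction k with
  | zero => simp
  | succ k ih =>
    obtain ⟨r, hr⟩ := ih
    refine ⟨r * (1+c*u) + k*c^2, ?_⟩
    have : (1+c*u)^k = u^2*r + 1 + k*c*u := by linarith
    rw [pow_succ, this]
    push_cast; ring

lemma base (n : ℕ) (hn : 2 ≤ n) (x y z : ℕ) (hx : 0 < x) (hy : 0 < y) (hz : 0 < z)
    (heq : (35 * n ^ 2 - 1) ^ x + (14 * n ^ 2 + 1) ^ y = (7 * n) ^ z) :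
    (x = 1 ∧ y = 1 ∧ z = 2) ∨ (4 ≤ z ∧ Odd x ∧ 7 * n^2 ∣ 5 * x + 2 * y) := by
  have hn2 : 1 ≤ 35 * n^2 := by nlinarith
  have hodd : Odd x := by
    by_contra hx2
    rw [Nat.not_odd_iff_even] at hx2
    have h1 : ((35*n^2-1 : ℕ) : ZMod 7) = -1 := by
      rw [Nat.cast_sub hn2]; push_cast
      rw [show (35 : ZMod 7) = 0 by decide]; ring
    have h2 : ((14*n^2+1 : ℕ) : ZMod 7) = 1 := by
      push_cast
      rw [show (14 : ZMod 7) = 0 by decide]; ring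
    have h3 := congrArg (Nat.cast (R := ZMod 7)) heq
    rw [Nat.cast_add, Nat.cast_pow, Nat.cast_pow, Nat.cast_pow, h1, h2, hx2.neg_one_pow] at h3
    rw [Nat.cast_mul, show ((7:ℕ) : ZMod 7) = 0 by decide, zero_mul, zero_pow hz.ne', one_pow] at h3
    exact absurd h3 (by decide)
  by_cases hz4 : 4 ≤ z
  · right
    refine ⟨hz4, hodd, ?_⟩
    have hZ : ((1:ℤ) + 2*(7*n^2))^y - (1 + (-5)*(7*n^2))^x = (7*n)^z := by
      have h3 := congrArg (Nat.cast (R := ℤ)) heq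
      push_cast [Nat.cast_sub hn2] at h3
      have : (1 + (-5)*(7*(n:ℤ)^2))^x = - (35*(n:ℤ)^2-1)^x := by
        rw [← hodd.neg_pow]; congr 1; ring
      rw [this, ← h3]; ring
    have d1 := one_add_pow_aux (7*n^2) 2 y
    have d2 := one_add_pow_aux (7*n^2) (-5) x
    have d3 : (7*(n:ℤ)^2)^2 ∣ (7*(n:ℤ))^z := by
      have : (7*(n:ℤ)^2)^2 ∣ (7*(n:ℤ))^4 := ⟨49, by ring⟩
      exact this.trans (pow_dvd_pow _ hz4)
    have d4 : (7*(n:ℤ)^2)^2 ∣ (7*(n:ℤ)^2) * (5*x+2*y) := by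
      have := dvd_sub d3 (dvd_sub d1 d2)
      rw [← hZ] at this
      refine this.trans (dvd_of_eq ?_)
      ring
    rw [pow_two] at d4
    have h0 : (7*(n:ℤ)^2) ≠ 0 := by positivity
    have d5 := (mul_dvd_mul_iff_left h0).mp d4
    exact_mod_cast d5
  · left
    have hC : (7*n)^z ≤ (7*n)^3 := Nat.pow_le_pow_right (by omega) (by omega)
    have hB : (7*n)^3 < (14*n^2+1)^2 := by nlinarith [pow_pos (by omega : 0 < n) 3]
    have hA : (7*n)^3 < (35*n^2-1)^2 := by
      refine hB.trans_le (Nat.pow_le_pow_left ?_ 2)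
      have : 2 ≤ 21 * n^2 := by nlinarith
      omega
    have hx1 : x = 1 := by
      by_contra h
      have : (35*n^2-1)^2 ≤ (35*n^2-1)^x := Nat.pow_le_pow_right (by omega) (by omega)
      omega
    have hy1 : y = 1 := by
      by_contra h
      have : (14*n^2+1)^2 ≤ (14*n^2+1)^y := Nat.pow_le_pow_right (by omega) (by omega)
      omega
    refine ⟨hx1, hy1, ?_⟩
    subst hx1 hy1
    have : (7*n)^z = (7*n)^2 := by
      rw [← heq]
      zify [hn2]; ring
    exact Nat.pow_right_injective (by omega) this

def sieve (A B C L g k : ℕ) (qs : List (ℕ × ℕ)) : Bool :=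
  (qs.all fun p => A^(L+1) % p.1 == A % p.1 && B^(L+1) % p.1 == B % p.1 && C^(L+1) % p.1 == C % p.1
      && C^p.2 % p.1 == 1) &&
  (List.range L).all fun x => x % 2 == 0 || (List.range (L/g)).all fun i =>
    (qs.any fun p => ((A^(x+L) + B^(x*k%g+g*i+L)) % p.1)^p.2 % p.1 != 1) ||
    (List.range L).all fun z => qs.any fun p => (A^(x+L) + B^(x*k%g+g*i+L)) % p.1 != C^(z+L) % p.1

lemma pow_red (A L q : ℕ) (h : A^(L+1) % q = A % q) (x : ℕ) (hx : 0 < x) :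
    A^(x % L + L) % q = A^x % q := by
  have h' : A^(L+1) ≡ A [MOD q] := h
  have step : ∀ m, 0 < m → A^(m+L) ≡ A^m [MOD q] := by
    intro m hm
    obtain ⟨k, rfl⟩ := Nat.exists_eq_succ_of_ne_zero hm.ne'
    calc A^(k+1+L) = A^k * A^(L+1) := by ring
      _ ≡ A^k * A [MOD q] := Nat.ModEq.mul_left _ h'
      _ = A^(k+1) := by ring
  have step2 : ∀ j m, 0 < m → A^(m+L*j) ≡ A^m [MOD q] := by
    intro j
    induction j with
    | zero => intro m _; rfl
    | succ j ih =>
      intro m hm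
      have := (step (m+L*j) (by omega)).trans (ih m hm)
      rwa [show m + L*(j+1) = m+L*j+L by ring]
  show A^(x % L + L) ≡ A^x [MOD q]
  have hd := Nat.mod_add_div x L
  by_cases h0 : x % L = 0
  · rw [h0, zero_add]
    rw [h0, zero_add] at hd
    have hL : 0 < L := by
      rcases Nat.eq_zero_or_pos L with h | h
      · subst h; simp at hd; omega
      · exact h
    obtain ⟨k, hk⟩ := Nat.exists_eq_succ_of_ne_zero (show x / L ≠ 0 by
      intro h; rw [h] at hd; simp at hd; omega)
    rw [← hd, hk, show L * (k+1) = L + L*k by ring]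
    exact (step2 k L hL).symm
  · refine (step _ (by omega)).trans ?_
    conv_rhs => rw [← hd]
    exact (step2 _ _ (by omega)).symm

lemma sieve_sound (A B C L g k : ℕ) (qs : List (ℕ × ℕ)) (h : sieve A B C L g k qs = true)
    (hL : 0 < L) (hL2 : 2 ∣ L) (hg : g ∣ L) (hgo : g.Coprime 2) (hk : g ∣ 2*k+5) (x y z : ℕ) (hx : Odd x) (hy : 0 < y) (hz : 0 < z)
    (hd : g ∣ 5*x+2*y) (heq : A^x+B^y = C^z) : False := by
  unfold sieve at h
  rw [Bool.and_eq_true, List.all_eq_true, List.all_eq_true] at h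
  obtain ⟨h1, h2⟩ := h
  have hx0 : 0 < x := hx.pos
  have hmod : ∀ p ∈ qs, (A^(x % L + L) + B^(y % L+L)) % p.1 = C^(z%L+L) % p.1 := by
    intro p hp
    have := h1 p hp
    simp only [Bool.and_eq_true, beq_iff_eq] at this
    obtain ⟨⟨⟨ha, hb⟩, hc⟩, _⟩ := this
    rw [pow_red C L _ hc z hz, Nat.add_mod, pow_red A L _ ha x hx0, pow_red B L _ hb y hy,
      ← Nat.add_mod, heq]
  have h3 := h2 (x % L) (List.mem_range.mpr (Nat.mod_lt _ hL))
  rw [Bool.or_eq_true] at h3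
  rcases h3 with h3 | h3
  · rw [beq_iff_eq, Nat.mod_mod_of_dvd _ hL2] at h3
    have := Nat.odd_iff.mp hx
    omega
  rw [List.all_eq_true] at h3
  have hg0 : 0 < g := Nat.pos_of_dvd_of_pos hg hL
  have hy2 : (y % L) % g = (x % L) * k % g := by
    rw [Nat.mod_mod_of_dvd _ hg]
    have ex : x % L ≡ x [MOD g] := (Nat.mod_modEq x L).of_dvd hg
    have e1 : y ≡ x * k [MOD g] := by
      have hd' : (g:ℤ) ∣ 2 * ((x * k : ℤ) - y) := by
        have t1 : (g:ℤ) ∣ 5*x+2*y := by exact_mod_cast hd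
        have t2 : (g:ℤ) ∣ 2*k+5 := by exact_mod_cast hk
        have := dvd_sub (t2.mul_right (x:ℤ)) t1
        refine this.trans (dvd_of_eq ?_)
        ring
      have hc : IsCoprime (g:ℤ) 2 := by
        have := Nat.isCoprime_iff_coprime.mpr hgo
        exact_mod_cast this
      have := hc.dvd_of_dvd_mul_left hd'
      rw [← Int.natCast_modEq_iff, Int.modEq_iff_dvd]
      push_cast; exact this
    exact e1.trans (ex.symm.mul_right k)
  have hyy : (x % L) * k % g + g * (y % L / g) = y % L := by
    rw [← hy2]; exact Nat.mod_add_div _ _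
  have h4 := h3 (y % L / g) (List.mem_range.mpr (by
    apply Nat.div_lt_div_of_lt_of_dvd hg (Nat.mod_lt _ hL)))
  rw [Bool.or_eq_true, hyy] at h4
  rcases h4 with h4 | h4
  · rw [List.any_eq_true] at h4
    obtain ⟨p, hp, h5⟩ := h4
    rw [bne_iff_ne] at h5
    apply h5
    rw [hmod p hp]
    have := h1 p hp
    simp only [Bool.and_eq_true, beq_iff_eq] at this
    obtain ⟨_, hc⟩ := this
    rw [← Nat.pow_mod, ← pow_mul, mul_comm, pow_mul, Nat.pow_mod, hc]
    have hq : 1 % p.1 = 1 := by rw [← hc]; simp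
    rw [one_pow, hq]
  · rw [List.all_eq_true] at h4
    have h5 := h4 (z % L) (List.mem_range.mpr (Nat.mod_lt _ hL))
    rw [List.any_eq_true] at h5
    obtain ⟨p, hp, h6⟩ := h5
    rw [bne_iff_ne] at h6
    exact h6 (hmod p hp)

lemma sieve3 : sieve 314 127 21 252 63 29 [(43, 7), (5, 1), (13, 4), (37, 18), (127, 63), (19, 18), (29, 28)] = true := by
  decide +kernel

lemma small3 (x y z : ℕ) (hx : Odd x) (hy : 0 < y) (hz : 0 < z)
    (hd : 7 * 3^2 ∣ 5*x+2*y) (heq : 314^x+127^y = 21^z) : False :=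
  sieve_sound _ _ _ _ _ _ _ sieve3 (by norm_num) (by norm_num) (by norm_num) (by norm_num) (by norm_num)
    x y z hx hy hz (Dvd.dvd.trans (by norm_num) hd) heq

lemma sieve5 : sieve 874 351 35 140 35 15 [(281, 35), (29, 14), (3, 2), (11, 10), (71, 70)] = true := by
  decide +kernel

lemma small5 (x y z : ℕ) (hx : Odd x) (hy : 0 < y) (hz : 0 < z)
    (hd : 7 * 5^2 ∣ 5*x+2*y) (heq : 874^x+351^y = 35^z) : False :=
  sieve_sound _ _ _ _ _ _ _ sieve5 (by norm_num) (by norm_num) (by norm_num) (by norm_num) (by norm_num)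
    x y z hx hy hz (Dvd.dvd.trans (by norm_num) hd) heq

lemma sieve7 : sieve 1714 687 49 490 49 22 [(197, 49), (3, 1), (11, 5), (71, 35), (491, 245)] = true := by
  decide +kernel

lemma small7 (x y z : ℕ) (hx : Odd x) (hy : 0 < y) (hz : 0 < z)
    (hd : 7 * 7^2 ∣ 5*x+2*y) (heq : 1714^x+687^y = 49^z) : False :=
  sieve_sound _ _ _ _ _ _ _ sieve7 (by norm_num) (by norm_num) (by norm_num) (by norm_num) (by norm_num)
    x y z hx hy hz (Dvd.dvd.trans (by norm_num) hd) heq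

lemma sieve13 : sieve 5914 2367 91 520 13 4 [(41, 4), (521, 104), (5, 1), (53, 26), (131, 65), (11, 5), (3, 1)] = true := by
  decide +kernel

lemma small13 (x y z : ℕ) (hx : Odd x) (hy : 0 < y) (hz : 0 < z)
    (hd : 7 * 13^2 ∣ 5*x+2*y) (heq : 5914^x+2367^y = 91^z) : False :=
  sieve_sound _ _ _ _ _ _ _ sieve13 (by norm_num) (by norm_num) (by norm_num) (by norm_num) (by norm_num)
    x y z hx hy hz (Dvd.dvd.trans (by norm_num) hd) heq

lemma gsum (a k b : ℕ) : ∑ j ∈ Finset.range (b+1), (-1:ℤ)^j * (k.choose j) * ((b+a-j).choose a)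
    = if k ≤ a then ((a+b-k).choose b : ℤ) else (-1)^b * ((k-a-1).choose b) := by
  induction k generalizing b with
  | zero =>
    rw [Finset.sum_range_succ', Finset.sum_eq_zero]
    · simp only [Nat.add_comm b a]
      simp
      exact_mod_cast Nat.choose_symm_add
    · intro j _
      simp
  | succ k ih =>
    cases b with
    | zero => simp
    | succ b =>
      have h1 := ih (b+1)
      have h2 := ih b
      have key : ∑ j ∈ Finset.range (b+1+1), (-1:ℤ)^j * ((k+1).choose j) * ((b+1+a-j).choose a)
        = (∑ j ∈ Finset.range (b+1+1), (-1:ℤ)^j * (k.choose j) * ((b+1+a-j).choose a))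
          - ∑ j ∈ Finset.range (b+1), (-1:ℤ)^j * (k.choose j) * ((b+a-j).choose a) := by
        rw [Finset.sum_range_succ', Finset.sum_range_succ' _ (b+1)]
        have : ∀ j ∈ Finset.range (b+1), (-1:ℤ)^(j+1) * ((k+1).choose (j+1)) * ((b+1+a-(j+1)).choose a)
          = (-1:ℤ)^(j+1) * (k.choose (j+1)) * ((b+1+a-(j+1)).choose a)
            - (-1:ℤ)^j * (k.choose j) * ((b+a-j).choose a) := by
          intro j _
          rw [Nat.choose_succ_succ, show b+1+a-(j+1) = b+a-j by omega]
          push_cast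
          ring
        rw [Finset.sum_congr rfl this, Finset.sum_sub_distrib]
        simp
        ring
      rw [key, h1, h2]
      rcases lt_trichotomy k a with h | h | h
      · rw [if_pos h.le, if_pos h.le, if_pos (by omega : k+1 ≤ a)]
        rw [show a + (b+1) - k = (a+b-k)+1 by omega, Nat.choose_succ_succ,
          show a + (b+1) - (k+1) = a+b-k by omega]
        push_cast; ring
      · subst h
        simp
      · rw [if_neg (by omega), if_neg (by omega), if_neg (by omega)]
        obtain ⟨c, rfl⟩ : ∃ c, k = a + 1 + c := ⟨k - a - 1, by omega⟩
        rw [show a+1+c-a-1 = c by omega, show a+1+c+1-a-1 = c+1 by omega, Nat.choose_succ_succ]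
        push_cast; ring

/-- homogeneous Pade polynomial -/
def PP {R : Type*} [CommRing R] (a b M : ℕ) (d β : R) : R :=
  ∑ k ∈ Finset.range (a+1), (((a+b-k).choose b * M.choose k : ℕ) : R) * d^k * β^(a-k)

lemma expand_aux_s1 {R : Type*} [CommRing R] (M j : ℕ) (hj : j ≤ M) (d β : R) :
    (M.choose j : R) * d^j * (β+d)^(M-j)
      = ∑ k ∈ Finset.range (M+1), (M.choose k : R) * (k.choose j) * d^k * β^(M-k) := by
  rw [show M+1 = j + (M-j+1) by omega, Finset.sum_range_add, Finset.sum_eq_zero, zero_add,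
    add_comm β d, add_pow, Finset.mul_sum]
  · apply Finset.sum_congr rfl
    intro i hi
    have hi' : i ≤ M - j := by simpa [Nat.lt_succ_iff] using hi
    have := Nat.choose_mul (n := M) (k := j+i) (s := j) (by omega)
    rw [show j + i - j = i by omega] at this
    have h2 : (M.choose (j+i) : R) * ((j+i).choose j) = (M.choose j) * ((M-j).choose i) := by
      exact_mod_cast congrArg (Nat.cast (R := R)) this
    rw [h2, show M - (j+i) = M-j-i by omega]
    ring
  · intro k hk
    rw [Nat.choose_eq_zero_of_lt (by simpa using hk : k < j)]
    simp

lemma pade {R : Type*} [CommRing R] (a b M ν μ : ℕ) (h1 : M = ν + b) (h2 : M = μ + a) (α β d : R)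
    (hα : α = β + d) :
    d^(a+b+1) ∣ α^ν * PP b a M (-d) α - β^μ * PP a b M d β := by
  have e1 : α^ν * PP b a M (-d) α = ∑ k ∈ Finset.range (M+1),
      (M.choose k : R) * d^k * β^(M-k) *
        ((∑ j ∈ Finset.range (b+1), (-1:ℤ)^j * (k.choose j) * ((b+a-j).choose a) : ℤ) : R) := by
    unfold PP
    rw [Finset.mul_sum]
    have : ∀ j ∈ Finset.range (b+1), α ^ ν * ((((b + a - j).choose a * M.choose j : ℕ):R) * (-d) ^ j * α ^ (b - j))
      = ∑ k ∈ Finset.range (M+1), (M.choose k : R) * d^k * β^(M-k) *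
        (((-1:ℤ)^j * (k.choose j) * ((b+a-j).choose a) : ℤ) : R) := by
      intro j hj
      have hj' : j ≤ b := by simpa [Nat.lt_succ_iff] using hj
      have h3 := expand_aux_s1 M j (by omega) d β
      have h4 : α ^ ν * α^(b-j) = (β+d)^(M-j) := by
        rw [← pow_add, hα, show ν + (b-j) = M - j by omega]
      calc _ = (-1)^j * ((b+a-j).choose a : R) * ((M.choose j : R) * d^j * (α ^ ν * α^(b-j))) := by
            rw [neg_pow d]; push_cast; ring
        _ = _ := by
            rw [h4, h3, Finset.mul_sum]
            apply Finset.sum_congr rfl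
            intro k _
            push_cast; ring
    rw [Finset.sum_congr rfl this, Finset.sum_comm]
    apply Finset.sum_congr rfl
    intro k _
    rw [← Finset.mul_sum]
    push_cast; rfl
  rw [e1, show M + 1 = (a+1) + (M-a) by omega, Finset.sum_range_add]
  have e2 : ∑ k ∈ Finset.range (a+1),
      (M.choose k : R) * d^k * β^(M-k) *
        ((∑ j ∈ Finset.range (b+1), (-1:ℤ)^j * (k.choose j) * ((b+a-j).choose a) : ℤ) : R)
      = β^μ * PP a b M d β := by
    unfold PP
    rw [Finset.mul_sum]
    apply Finset.sum_congr rfl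
    intro k hk
    have hk' : k ≤ a := by simpa [Nat.lt_succ_iff] using hk
    rw [gsum, if_pos hk', show M - k = μ + (a-k) by omega, pow_add]
    push_cast; ring
  rw [e2, add_sub_cancel_left]
  apply Finset.dvd_sum
  intro i _
  rw [gsum, if_neg (by omega)]
  by_cases h : a+1+i ≤ a+b
  · rw [Nat.choose_eq_zero_of_lt (show a+1+i-a-1 < b by omega)]
    simp
  · apply Dvd.dvd.mul_right
    apply Dvd.dvd.mul_right
    apply Dvd.dvd.mul_left
    exact pow_dvd_pow _ (by omega)

open Polynomial in
lemma pade_det (a b M ν μ : ℕ) (h1 : M = ν + b) (h2 : M = μ + a) (hν : a < ν) (α β : ℤ)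
    (hβ : β ≠ 0) (hne : α ≠ β) :
    PP a b M (α-β) β * PP (b+1) (a+1) (M+1) (-(α-β)) α
      ≠ PP (a+1) (b+1) (M+1) (α-β) β * PP b a M (-(α-β)) α := by
  intro hcon
  set P : ℤ[X] := PP a b M (X - C β) (C β) with hP
  set Q : ℤ[X] := PP b a M (-(X - C β)) X with hQ
  set P' : ℤ[X] := PP (a+1) (b+1) (M+1) (X - C β) (C β) with hP'
  set Q' : ℤ[X] := PP (b+1) (a+1) (M+1) (-(X - C β)) X with hQ'
  set D := P * Q' - P' * Q with hD
  have ev : ∀ (t : ℤ) (a b M : ℕ), (PP a b M (X - C β) (C β)).eval t = PP a b M (t-β) β := by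
    intro t a b M; simp [PP, eval_finsetSum]
  have ev2 : ∀ (t : ℤ) (a b M : ℕ), (PP a b M (-(X - C β)) X).eval t = PP a b M (-(t-β)) t := by
    intro t a b M; simp [PP, eval_finsetSum]
  have d1 := pade a b M ν μ h1 h2 (X : ℤ[X]) (C β) (X - C β) (by ring)
  have d2 := pade (a+1) (b+1) (M+1) ν μ (by omega) (by omega) (X : ℤ[X]) (C β) (X - C β) (by ring)
  have hdvd : (X - C β)^(a+b+1) ∣ X^ν * D := by
    have d2' : (X - C β)^(a+b+1) ∣ X^ν * Q' - (C β)^μ * P' :=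
      (pow_dvd_pow _ (by omega)).trans d2
    have : X^ν * D = P * (X^ν * Q' - (C β)^μ * P') - P' * (X^ν * Q - (C β)^μ * P) := by
      rw [hD]; ring
    rw [this]
    exact dvd_sub (d2'.mul_left _) (d1.mul_left _)
  have hnd : ¬ (X - C β) ∣ (X : ℤ[X])^ν := by
    intro h
    rw [dvd_iff_isRoot] at h
    simp [IsRoot] at h
    exact hβ h.1
  have hD2 : (X - C β)^(a+b+1) ∣ D := (prime_X_sub_C β).pow_dvd_of_dvd_mul_left _ hnd hdvd
  obtain ⟨E, hE⟩ := hD2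
  have hz0 : D.eval 0 ≠ 0 := by
    have q0 : ∀ (a b M : ℕ), PP a b M (-((0:ℤ)-β)) 0 = (M.choose a) * β^a := by
      intro a b M
      unfold PP
      rw [Finset.sum_range_succ, Finset.sum_eq_zero]
      · simp
      · intro k hk
        rw [zero_pow (by have : k < a := by simpa using hk
                         omega)]
        simp
    have p0 : ∀ (a b M : ℕ), b < M → PP a b M ((0:ℤ)-β) β = (-1)^a * ((M-b-1).choose a) * β^a := by
      intro a b M hM
      have := gsum b M a
      rw [if_neg (by omega)] at this
      rw [← this, Finset.sum_mul]
      unfold PP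
      apply Finset.sum_congr rfl
      intro k hk
      have hk' : k ≤ a := by simpa [Nat.lt_succ_iff] using hk
      obtain ⟨c, rfl⟩ := Nat.exists_eq_add_of_le hk'
      rw [zero_sub, neg_pow β, show k + c - k = c by omega, pow_add]
      push_cast; ring
    rw [hD, eval_sub, eval_mul, eval_mul, hP, hQ, hP', hQ', ev, ev, ev2, ev2, q0, q0,
      p0 _ _ _ (by omega), p0 _ _ _ (by omega)]
    rw [show M+1-(b+1)-1 = M-b-1 by omega]
    have e : (-1:ℤ) ^ a * ((M - b - 1).choose a) * β ^ a * (((M + 1).choose (b + 1)) * β ^ (b + 1)) -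
        (-1) ^ (a + 1) * ((M - b - 1).choose (a + 1)) * β ^ (a + 1) * ((M.choose b) * β ^ b)
        = (-1)^a * β^(a+b+1) * (((M - b - 1).choose a * (M + 1).choose (b + 1)
          + (M - b - 1).choose (a + 1) * M.choose b : ℕ) : ℤ) := by
      push_cast; ring
    rw [e]
    have pos1 : 0 < (M-b-1).choose a := Nat.choose_pos (by omega)
    have pos2 : 0 < (M+1).choose (b+1) := Nat.choose_pos (by omega)
    have pos3 := Nat.mul_pos pos1 pos2
    refine mul_ne_zero (mul_ne_zero (pow_ne_zero _ (by norm_num)) (pow_ne_zero _ hβ)) ?_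
    exact_mod_cast (by omega)
  have degP : ∀ (a b M : ℕ), (PP a b M (X - C β) (C β)).natDegree ≤ a := by
    intro a b M
    unfold PP
    apply natDegree_sum_le_of_forall_le
    intro k hk
    have hk' : k ≤ a := by simpa [Nat.lt_succ_iff] using hk
    rw [← C_pow]
    refine (natDegree_mul_C_le _ _).trans ?_
    rw [← C_eq_natCast]
    refine (natDegree_C_mul_le _ _).trans ?_
    refine natDegree_pow_le.trans ?_
    rw [natDegree_X_sub_C]; omega
  have degQ : ∀ (a b M : ℕ), (PP a b M (-(X - C β)) X).natDegree ≤ a := by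
    intro a b M
    unfold PP
    apply natDegree_sum_le_of_forall_le
    intro k hk
    have hk' : k ≤ a := by simpa [Nat.lt_succ_iff] using hk
    refine natDegree_mul_le.trans ?_
    rw [natDegree_X_pow, ← C_eq_natCast]
    have h1 : (C (((a + b - k).choose b * M.choose k : ℕ) : ℤ) * (-(X - C β)) ^ k).natDegree ≤ k := by
      refine (natDegree_C_mul_le _ _).trans ?_
      refine natDegree_pow_le.trans ?_
      rw [natDegree_neg, natDegree_X_sub_C]; omega
    have h1' : (C (((a + b - k).choose b * M.choose k : ℕ) : ℤ) * (-(X - C β)) ^ k).natDegree + (a-k) ≤ a := by omega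
    convert h1' using 4
  have hdeg : D.natDegree ≤ a+b+1 := by
    refine (natDegree_sub_le _ _).trans (max_le ?_ ?_)
    · refine natDegree_mul_le.trans ?_
      exact (add_le_add (degP a b M) (degQ (b+1) (a+1) (M+1))).trans (by omega)
    · refine natDegree_mul_le.trans ?_
      exact (add_le_add (degP (a+1) (b+1) (M+1)) (degQ b a M)).trans (by omega)
  have hD0 : D ≠ 0 := by
    intro h; apply hz0; rw [h]; simp
  have hE0 : E ≠ 0 := by
    intro h; apply hD0; rw [hE, h, mul_zero]
  have hEd : E.natDegree = 0 := by
    rw [hE, natDegree_mul (pow_ne_zero _ (X_sub_C_ne_zero β)) hE0, natDegree_pow, natDegree_X_sub_C] at hdeg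
    omega
  obtain ⟨e, he⟩ := natDegree_eq_zero.mp hEd
  have : D.eval α = 0 := by
    rw [hD, eval_sub, eval_mul, eval_mul, hP, hQ, hP', hQ', ev, ev, ev2, ev2, hcon, sub_self]
  rw [hE, ← he] at this
  simp at this
  rcases this with h | h
  · exact hne (by linarith [h])
  · apply hE0; rw [← he, h]; simp

lemma choose_le_weight (s b : ℕ) (σ τ : ℝ) (hσ : 0 < σ) (hτ : 0 < τ) (h : σ⁻¹ + τ⁻¹ = 1) :
    ((s+b).choose b : ℝ) ≤ σ^s * τ^b := by
  have h1 : (σ⁻¹)^s * (τ⁻¹)^b * ((s+b).choose b : ℝ) ≤ 1 := by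
    have := add_pow (σ⁻¹) (τ⁻¹) (s+b)
    rw [h, one_pow] at this
    rw [this]
    have h2 := Finset.single_le_sum (s := Finset.range (s+b+1))
      (f := fun m => σ⁻¹ ^ m * τ⁻¹ ^ (s + b - m) * ((s + b).choose m : ℝ))
      (fun i _ => by positivity) (Finset.mem_range.mpr (by omega : s < s+b+1))
    simp only [show s + b - s = b by omega] at h2
    rw [Nat.choose_symm_add] at h2
    exact h2
  rw [inv_pow, inv_pow] at h1
  have p1 : 0 < σ^s := by positivity
  have p2 : 0 < τ^b := by positivity
  calc ((s+b).choose b : ℝ) = ((σ^s)⁻¹ * (τ^b)⁻¹ * ((s+b).choose b : ℝ)) * (σ^s * τ^b) := by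
        field_simp
    _ ≤ 1 * (σ^s * τ^b) := by gcongr
    _ = _ := one_mul _

lemma PP_bound (d β : ℤ) (U c e σ τ t s r : ℝ) (hU : 0 < U) (hc : 0 < c) (he : 0 < e)
    (hσ : 0 < σ) (hτ : 0 < τ) (h : σ⁻¹ + τ⁻¹ = 1)
    (hd : |(d:ℝ)| ≤ e * U) (hβ : |(β:ℝ)| ≤ c * U)
    (ht : τ ≤ 2^t) (hs : σ * c ≤ 2^s) (hr : 1 + e / (σ*c) ≤ 2^r) (a b M : ℕ) :
    |((PP a b M d β : ℤ) : ℝ)| ≤ 2^(t*b + s*a + r*M) * U^a := by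
  have h1 : |((PP a b M d β : ℤ) : ℝ)| ≤ ∑ k ∈ Finset.range (a+1),
      τ^b * U^a * (σ*c)^a * ((M.choose k : ℝ) * (e/(σ*c))^k) := by
    unfold PP
    push_cast
    refine (Finset.abs_sum_le_sum_abs _ _).trans (Finset.sum_le_sum ?_)
    intro k hk
    have hk' : k ≤ a := by simpa [Nat.lt_succ_iff] using hk
    rw [abs_mul, abs_mul, abs_mul, abs_pow, abs_pow, Nat.abs_cast, Nat.abs_cast]
    have h2 := choose_le_weight (a-k) b σ τ hσ hτ h
    rw [show a - k + b = a + b - k by omega] at h2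
    calc _ ≤ (σ^(a-k) * τ^b) * (M.choose k) * (e*U)^k * (c*U)^(a-k) := by gcongr
      _ = τ^b * (U^(a-k) * U^k) * ((σ*c)^(a-k)) * ((M.choose k : ℝ) * e^k) := by
          rw [mul_pow, mul_pow, mul_pow]; ring
      _ = τ^b * U^a * (σ*c)^a * ((M.choose k : ℝ) * (e/(σ*c))^k) := by
          rw [← pow_add, Nat.sub_add_cancel hk', div_pow]
          have : (σ*c)^a = (σ*c)^(a-k) * (σ*c)^k := by rw [← pow_add, Nat.sub_add_cancel hk']
          rw [this]
          field_simp
  rw [← Finset.mul_sum] at h1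
  have h3 : ∑ k ∈ Finset.range (a+1), ((M.choose k : ℝ) * (e/(σ*c))^k) ≤ (1 + e/(σ*c))^M := by
    rw [add_comm (1:ℝ), add_pow]
    have : ∀ k, (e/(σ*c))^k * 1^(M-k) * (M.choose k : ℝ) = (M.choose k : ℝ) * (e/(σ*c))^k := by
      intro k; rw [one_pow]; ring
    simp only [this]
    by_cases hM : a ≤ M
    · apply Finset.sum_le_sum_of_subset_of_nonneg
      · intro i hi; simp at hi ⊢; omega
      · intros; positivity
    · rw [← Finset.sum_subset (s₁ := Finset.range (M+1)) (s₂ := Finset.range (a+1))]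
      · intro i hi; simp at hi ⊢; omega
      · intro i _ hi
        simp at hi
        rw [Nat.choose_eq_zero_of_lt (by omega)]; simp
  have e1 : τ^b ≤ (2:ℝ)^(t*b) := by
    rw [Real.rpow_mul_natCast (by norm_num)]
    exact pow_le_pow_left₀ hτ.le ht _
  have e2 : (σ*c)^a ≤ (2:ℝ)^(s*a) := by
    rw [Real.rpow_mul_natCast (by norm_num)]
    exact pow_le_pow_left₀ (by positivity) hs _
  have e3 : (1 + e/(σ*c))^M ≤ (2:ℝ)^(r*M) := by
    rw [Real.rpow_mul_natCast (by norm_num)]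
    exact pow_le_pow_left₀ (by positivity) hr _
  calc _ ≤ τ^b * U^a * (σ*c)^a * (1 + e/(σ*c))^M := h1.trans (by gcongr)
    _ ≤ 2^(t*b) * U^a * 2^(s*a) * 2^(r*M) := by gcongr
    _ = _ := by
      rw [Real.rpow_add (by norm_num), Real.rpow_add (by norm_num)]; ring

lemma quarter (U κ E f X Y : ℝ) (hκ : (2:ℝ)^κ ≤ U) (hU : 0 < U) (a g N : ℕ) (hN : a + g ≤ N)
    (hX : |X| ≤ 2^E * U^a) (hY : |Y| ≤ 2^f * U^g)
    (h : E + f + 2 ≤ κ * (N - a - g)) : |X * Y| ≤ U^N / 4 := by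
  obtain ⟨m, rfl⟩ := Nat.exists_eq_add_of_le hN
  have h' : E + f + 2 ≤ κ * m := by
    refine h.trans (le_of_eq ?_)
    push_cast; ring
  have h1 : (2:ℝ)^(E+f+2) ≤ U^m := by
    calc (2:ℝ)^(E+f+2) ≤ 2^(κ*m) := Real.rpow_le_rpow_of_exponent_le (by norm_num) h'
      _ = (2^κ)^m := Real.rpow_mul_natCast (by norm_num) _ _
      _ ≤ U^m := by gcongr
  rw [Real.rpow_add (by norm_num), Real.rpow_add (by norm_num)] at h1
  have h2 : (2:ℝ)^(2:ℝ) = 4 := by norm_num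
  rw [h2] at h1
  rw [abs_mul]
  calc |X| * |Y| ≤ (2^E * U^a) * (2^f * U^g) := by gcongr
    _ = (2^E * 2^f * 4) * (U^a * U^g) / 4 := by ring
    _ ≤ U^m * (U^a * U^g) / 4 := by gcongr
    _ = _ := by ring

lemma zero_of_small (W X Y : ℤ) (N : ℕ) (hW : 0 < W) (hD : W^N ∣ X - Y)
    (hX : |(X:ℝ)| ≤ (W:ℝ)^N / 4) (hY : |(Y:ℝ)| ≤ (W:ℝ)^N / 4) : X = Y := by
  have hpos : (0:ℝ) < (W:ℝ)^N := by have : (0:ℝ) < W := by exact_mod_cast hW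
                                    positivity
  have h1 : |((X - Y : ℤ):ℝ)| < (W:ℝ)^N := by
    push_cast
    calc |(X:ℝ) - Y| ≤ |(X:ℝ)| + |(Y:ℝ)| := abs_sub _ _
      _ ≤ (W:ℝ)^N/4 + (W:ℝ)^N/4 := add_le_add hX hY
      _ < _ := by linarith
  have h2 : |X - Y| < W^N := by exact_mod_cast h1
  have := Int.eq_zero_of_abs_lt_dvd hD h2
  linarith

lemma closing (a b M ν μ : ℕ) (h1 : M = ν + b) (h2 : M = μ + a) (hν : a < ν) (α β : ℤ)
    (hβ : β ≠ 0) (hne : α ≠ β) (η θ W : ℤ) (hη0 : η ≠ 0) (hW : 0 < W)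
    (κ t₁ s₁ r₁ f₁ t₂ s₂ r₂ f₂ : ℝ) (g₁ g₂ : ℕ) (hκ : (2:ℝ)^κ ≤ W)
    (hP : ∀ a b M : ℕ, |((PP a b M (α-β) β : ℤ):ℝ)| ≤ 2^(t₁*b + s₁*a + r₁*M) * (W:ℝ)^a)
    (hQ : ∀ a b M : ℕ, |((PP a b M (-(α-β)) α : ℤ):ℝ)| ≤ 2^(t₂*b + s₂*a + r₂*M) * (W:ℝ)^a)
    (hη : |(η:ℝ)| ≤ 2^f₁ * (W:ℝ)^g₁) (hθ : |(θ:ℝ)| ≤ 2^f₂ * (W:ℝ)^g₂)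
    (hg₁ : g₁ ≤ b+1) (hg₂ : g₂ ≤ a+1)
    (i₁ : t₁*b + s₁*a + r₁*M + f₁ + 2 ≤ κ * (b+1-g₁)) (j₁ : t₁ + s₁ + r₁ ≤ κ)
    (i₂ : t₂*a + s₂*b + r₂*M + f₂ + 2 ≤ κ * (a+1-g₂)) (j₂ : t₂ + s₂ + r₂ ≤ κ)
    (hd : W^(a+b+1) ∣ PP a b M (α-β) β * η - PP b a M (-(α-β)) α * θ)
    (hd' : W^(a+b+3) ∣ PP (a+1) (b+1) (M+1) (α-β) β * η - PP (b+1) (a+1) (M+1) (-(α-β)) α * θ) :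
    False := by
  have hWr : (0:ℝ) < W := by exact_mod_cast hW
  have E1 := zero_of_small W _ _ _ hW hd
    (by push_cast
        exact quarter W κ _ f₁ _ _ hκ hWr a g₁ _ (by omega) (hP a b M) hη (by push_cast; linarith))
    (by push_cast
        exact quarter W κ _ f₂ _ _ hκ hWr b g₂ _ (by omega) (hQ b a M) hθ (by push_cast; linarith))
  have E2 := zero_of_small W _ _ _ hW hd'
    (by push_cast
        exact quarter W κ _ f₁ _ _ hκ hWr (a+1) g₁ _ (by omega) (hP (a+1) (b+1) (M+1)) hη
          (by push_cast; linarith))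
    (by push_cast
        exact quarter W κ _ f₂ _ _ hκ hWr (b+1) g₂ _ (by omega) (hQ (b+1) (a+1) (M+1)) hθ
          (by push_cast; linarith))
  apply pade_det a b M ν μ h1 h2 hν α β hβ hne
  apply mul_left_cancel₀ hη0
  linear_combination (PP (b+1) (a+1) (M+1) (-(α-β)) α) * E1 - (PP b a M (-(α-β)) α) * E2

lemma rp (x t : ℝ) (q : ℕ) (p : ℤ) (hq : q ≠ 0) (ht : t * q = p) (h : x^q ≤ (2:ℝ)^p) :
    x ≤ (2:ℝ)^t := by
  apply le_of_pow_le_pow_left₀ hq (by positivity)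
  rw [← Real.rpow_mul_natCast (by norm_num), ht, Real.rpow_intCast]
  exact h

lemma rp' (x t : ℝ) (q p : ℕ) (hx : 0 ≤ x) (hq : q ≠ 0) (ht : t * q = p) (h : (2:ℝ)^p ≤ x^q) :
    (2:ℝ)^t ≤ x := by
  apply le_of_pow_le_pow_left₀ hq hx
  rw [← Real.rpow_mul_natCast (by norm_num), ht, Real.rpow_natCast]
  exact h

lemma size_bounds (u C A B x y z : ℕ) (hu : 1575 ≤ u) (hC : C^2 = 7*u) (hA : A + 1 = 5*u)
    (hB : B = 2*u+1) (heq : A^x + B^y = C^z) (hz : 0 < z) :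
    12*y < 7*z ∧ 40*x < 21*z ∧ (z ≤ 2*x ∨ z ≤ 2*y) := by
  have hC2 : 2 < C := by nlinarith
  have hApos : 0 < A^x := Nat.pow_pos (by omega)
  have hBpos : 0 < B^y := Nat.pow_pos (by omega)
  have hB7 : C^12 ≤ B^7 := by
    calc C^12 = (C^2)^6 := by ring
      _ = 117649 * u^6 := by rw [hC]; ring
      _ ≤ (128 * u) * u^6 := by gcongr; omega
      _ = (2*u)^7 := by ring
      _ ≤ B^7 := by gcongr; omega
  have hA21 : C^40 ≤ A^21 := by
    have h1 : 10^21 * C^40 ≤ 10^21 * A^21 := by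
      calc 10^21 * C^40 = 10^21 * (C^2)^20 := by ring
        _ = (10^21 * 7^20) * u^20 := by rw [hC]; ring
        _ ≤ (49^21 * u) * u^20 := Nat.mul_le_mul_right _ (by omega)
        _ = (49*u)^21 := by ring
        _ ≤ (10*A)^21 := Nat.pow_le_pow_left (by omega) _
        _ = _ := by ring
    exact Nat.le_of_mul_le_mul_left h1 (by norm_num)
  refine ⟨?_, ?_, ?_⟩
  · by_contra h
    have h1 : (C^z)^12 ≤ (B^y)^12 := by
      calc (C^z)^12 = (C^12)^z := by rw [← pow_mul, ← pow_mul, mul_comm]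
        _ ≤ (B^7)^z := by gcongr
        _ = B^(7*z) := by rw [← pow_mul]
        _ ≤ B^(y*12) := Nat.pow_le_pow_right (by omega) (by omega)
        _ = _ := by rw [pow_mul]
    have := lt_of_pow_lt_pow_left₀ 12 (by omega) (lt_of_le_of_lt h1 (Nat.pow_lt_pow_left (by omega : B^y < C^z) (by norm_num)))
    omega
  · by_contra h
    have h1 : (C^z)^40 ≤ (A^x)^40 := by
      calc (C^z)^40 = (C^40)^z := by rw [← pow_mul, ← pow_mul, mul_comm]
        _ ≤ (A^21)^z := by gcongr
        _ = A^(21*z) := by rw [← pow_mul]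
        _ ≤ A^(x*40) := Nat.pow_le_pow_right (by omega) (by omega)
        _ = _ := by rw [pow_mul]
    have := lt_of_pow_lt_pow_left₀ 40 (by omega) (lt_of_le_of_lt h1 (Nat.pow_lt_pow_left (by omega : A^x < C^z) (by norm_num)))
    omega
  · by_contra h
    push Not at h
    have h1 : A^x ≤ C^(z-1) := by
      calc A^x ≤ (C^2)^x := by gcongr; omega
        _ = C^(2*x) := by rw [pow_mul]
        _ ≤ _ := Nat.pow_le_pow_right (by omega) (by omega)
    have h2 : B^y ≤ C^(z-1) := by
      calc B^y ≤ (C^2)^y := by gcongr; omega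
        _ = C^(2*y) := by rw [pow_mul]
        _ ≤ _ := Nat.pow_le_pow_right (by omega) (by omega)
    have h3 : C^z = C^(z-1) * C := by rw [← pow_succ]; congr 1; omega
    have h4 : 0 < C^(z-1) := Nat.pow_pos (by omega)
    nlinarith

lemma nine (u : ℤ) (hu : 1575 ≤ u) : (1575:ℝ) ≤ u := by exact_mod_cast hu

lemma kap (u : ℤ) (hu : 1575 ≤ u) : (2:ℝ)^(10.6:ℝ) ≤ u :=
  (rp' 1575 10.6 5 53 (by norm_num) (by norm_num) (by norm_num) (by norm_num)).trans (nine u hu)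

lemma case1 (u : ℤ) (hu : 1575 ≤ u) (x y w : ℕ) (hw : 207 ≤ w)
    (hK : ∀ K ≤ w, (7*u)^K ∣ (1+2*u)^y - (1-5*u)^x)
    (hy1 : 12*y < 14*w+7) (hy2 : w ≤ y) (hx : 20*x ≤ 9*w) : False := by
  have hu' := nine u hu
  obtain ⟨b, hb1, hb2⟩ : ∃ b, 2*b+x+3 ≤ w ∧ w < 2*b+x+5 := ⟨(w-x-3)/2, by omega, by omega⟩
  have hdiv : ∀ a b M : ℕ, M = y+b → M = (y-x)+a → a+b+1 ≤ w → u^(a+b+1) ∣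
      PP a b M ((1+2*u)-1) 1 * 1 - PP b a M (-((1+2*u)-1)) (1+2*u) * (1-5*u)^x := by
    intro a b M h1 h2 h3
    have p := pade a b M y (y-x) h1 h2 (1+2*u) 1 ((1+2*u)-1) (by ring)
    have p1 := (pow_dvd_pow_of_dvd (⟨2, by ring⟩ : u ∣ (1+2*u)-1) (a+b+1)).trans p
    have p2 := (pow_dvd_pow_of_dvd (⟨7, by ring⟩ : u ∣ 7*u) (a+b+1)).trans (hK _ h3)
    have := (p2.mul_right (PP b a M (-((1+2*u)-1)) (1+2*u))).sub p1
    rw [one_pow] at this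
    refine this.trans (dvd_of_eq ?_)
    ring
  have c1 : (12:ℝ)*y < 14*w+7 := by exact_mod_cast hy1
  have c2 : (w:ℝ) ≤ y := by exact_mod_cast hy2
  have c3 : (20:ℝ)*x ≤ 9*w := by exact_mod_cast hx
  have c4 : (2:ℝ)*b+x+3 ≤ w := by exact_mod_cast hb1
  have c5 : (w:ℝ)+1 ≤ 2*b+x+5 := by exact_mod_cast hb2
  have c6 : (207:ℝ) ≤ w := by exact_mod_cast hw
  have c7 : (0:ℝ) ≤ x := by positivity
  refine closing (b+x) b (y+b) y (y-x) rfl (by omega) (by omega) (1+2*u) 1 (by norm_num) (by omega)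
    1 ((1-5*u)^x) u (by norm_num) (by omega) 10.6 0.2 1 1 0 0.2 4.1 0.2 (2.33*x) 0 x (kap u hu)
    (PP_bound _ _ u (1/4) 2 8 (8/7) 0.2 1 1 (by linarith) (by norm_num) (by norm_num) (by norm_num)
      (by norm_num) (by norm_num) ?_ ?_ ?_ (by norm_num) (by norm_num))
    (PP_bound _ _ u 2.001 2 8 (8/7) 0.2 4.1 0.2 (by linarith) (by norm_num) (by norm_num)
      (by norm_num) (by norm_num) (by norm_num) ?_ ?_ ?_ ?_ ?_)
    (by norm_num) ?_ (by omega) (by omega) ?_ (by norm_num) ?_ (by norm_num)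
    (hdiv _ _ _ rfl (by omega) (by omega)) ?_
  · push_cast; rw [abs_le]; constructor <;> linarith
  · push_cast; rw [abs_le]; constructor <;> linarith
  · exact rp _ _ 5 1 (by norm_num) (by norm_num) (by norm_num)
  · push_cast; rw [abs_le]; constructor <;> linarith
  · push_cast; rw [abs_le]; constructor <;> linarith
  · exact rp _ _ 5 1 (by norm_num) (by norm_num) (by norm_num)
  · exact rp _ _ 10 41 (by norm_num) (by norm_num) (by norm_num)
  · exact rp _ _ 5 1 (by norm_num) (by norm_num) (by norm_num)
  · push_cast
    rw [Real.rpow_mul_natCast (by norm_num), ← mul_pow, abs_pow]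
    have h5 : (5:ℝ) ≤ 2^(2.33:ℝ) := rp _ _ 100 233 (by norm_num) (by norm_num) (by norm_num)
    refine pow_le_pow_left₀ (abs_nonneg _) ?_ _
    calc |1 - 5*(u:ℝ)| ≤ 5 * u := by rw [abs_le]; constructor <;> linarith
      _ ≤ _ := by gcongr
  · push_cast; linarith
  · push_cast; linarith
  · rw [show b+x+b+3 = (b+x+1)+(b+1)+1 by omega]
    exact hdiv (b+x+1) (b+1) (y+b+1) (by omega) (by omega) (by omega)

lemma case2 (u : ℤ) (hu : 1575 ≤ u) (x y w : ℕ) (hw : 207 ≤ w)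
    (hK : ∀ K ≤ w, (7*u)^K ∣ (1+2*u)^y - (1-5*u)^x)
    (hx1 : 40*x < 42*w+21) (hx2 : w ≤ x) (hy : 4*y ≤ w) : False := by
  have hu' := nine u hu
  obtain ⟨a, ha1, ha2⟩ : ∃ a, 2*a+y+3 ≤ w ∧ w < 2*a+y+5 := ⟨(w-y-3)/2, by omega, by omega⟩
  have hdiv : ∀ a b M : ℕ, M = (x-y)+b → M = x+a → a+b+1 ≤ w → u^(a+b+1) ∣
      PP a b M (1-(1-5*u)) (1-5*u) * (1+2*u)^y - PP b a M (-(1-(1-5*u))) 1 * 1 := by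
    intro a b M h1 h2 h3
    have p := pade a b M (x-y) x h1 h2 1 (1-5*u) (1-(1-5*u)) (by ring)
    have p1 := (pow_dvd_pow_of_dvd (⟨5, by ring⟩ : u ∣ 1-(1-5*u)) (a+b+1)).trans p
    have p2 := (pow_dvd_pow_of_dvd (⟨7, by ring⟩ : u ∣ 7*u) (a+b+1)).trans (hK _ h3)
    have := (p2.mul_right (PP a b M (1-(1-5*u)) (1-5*u))).sub p1
    rw [one_pow] at this
    refine this.trans (dvd_of_eq ?_)
    ring
  have c1 : (40:ℝ)*x < 42*w+21 := by exact_mod_cast hx1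
  have c2 : (w:ℝ) ≤ x := by exact_mod_cast hx2
  have c3 : (4:ℝ)*y ≤ w := by exact_mod_cast hy
  have c4 : (2:ℝ)*a+y+3 ≤ w := by exact_mod_cast ha1
  have c5 : (w:ℝ)+1 ≤ 2*a+y+5 := by exact_mod_cast ha2
  have c6 : (207:ℝ) ≤ w := by exact_mod_cast hw
  have c7 : (0:ℝ) ≤ y := by positivity
  refine closing a (a+y) (x+a) (x-y) x (by omega) rfl (by omega) 1 (1-5*u) (by omega) (by omega)
    ((1+2*u)^y) 1 u (pow_ne_zero _ (by omega)) (by omega) 10.6 0.2 (16/3) 0.2 (1.01*y) 0.2 3 0.71 0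
    y 0 (kap u hu)
    (PP_bound _ _ u 5 5 8 (8/7) 0.2 (16/3) 0.2 (by linarith) (by norm_num) (by norm_num) (by norm_num)
      (by norm_num) (by norm_num) ?_ ?_ ?_ ?_ ?_)
    (PP_bound _ _ u 1 5 8 (8/7) 0.2 3 0.71 (by linarith) (by norm_num) (by norm_num)
      (by norm_num) (by norm_num) (by norm_num) ?_ ?_ ?_ (by norm_num) ?_)
    ?_ (by norm_num) (by omega) (by omega) ?_ (by norm_num) ?_ (by norm_num)
    (hdiv _ _ _ (by omega) rfl (by omega)) ?_
  · push_cast; rw [abs_le]; constructor <;> linarith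
  · push_cast; rw [abs_le]; constructor <;> linarith
  · exact rp _ _ 5 1 (by norm_num) (by norm_num) (by norm_num)
  · exact rp _ _ 3 16 (by norm_num) (by norm_num) (by norm_num)
  · exact rp _ _ 5 1 (by norm_num) (by norm_num) (by norm_num)
  · push_cast; rw [abs_le]; constructor <;> linarith
  · push_cast; rw [abs_le]; constructor <;> linarith
  · exact rp _ _ 5 1 (by norm_num) (by norm_num) (by norm_num)
  · exact rp _ _ 100 71 (by norm_num) (by norm_num) (by norm_num)
  · push_cast
    rw [Real.rpow_mul_natCast (by norm_num), ← mul_pow, abs_pow]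
    have h5 : (2.001:ℝ) ≤ 2^(1.01:ℝ) := rp _ _ 100 101 (by norm_num) (by norm_num) (by norm_num)
    refine pow_le_pow_left₀ (abs_nonneg _) ?_ _
    calc |1 + 2*(u:ℝ)| ≤ 2.001 * u := by rw [abs_le]; constructor <;> linarith
      _ ≤ _ := by gcongr
  · push_cast; linarith
  · push_cast; linarith
  · rw [show a+(a+y)+3 = (a+1)+(a+y+1)+1 by omega]
    exact hdiv (a+1) (a+y+1) (x+a+1) (by omega) (by omega) (by omega)

lemma case3 (u : ℤ) (hu : 1575 ≤ u) (x y w : ℕ)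
    (hK : ∀ K ≤ w, (7*u)^K ∣ (1+2*u)^y - (1-5*u)^x) (hc : IsCoprime (7*u) (1-5*u))
    (a b M : ℕ) (hM1 : M = y + b) (hM2 : M = x + a) (hay : a < y) (hab : a+b+3 ≤ w)
    (i₁ : b + 0.52*a + 0.77*M + 2 ≤ 13.4*((b:ℝ)+1))
    (i₂ : a - 0.8*b + 1.46*M + 2 ≤ 13.4*((a:ℝ)+1)) : False := by
  have hu' := nine u hu
  have hdiv : ∀ a b M : ℕ, M = y+b → M = x+a → a+b+1 ≤ w → (7*u)^(a+b+1) ∣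
      PP a b M ((1+2*u)-(1-5*u)) (1-5*u) * 1 - PP b a M (-((1+2*u)-(1-5*u))) (1+2*u) * 1 := by
    intro a b M h1 h2 h3
    have p := pade a b M y x h1 h2 (1+2*u) (1-5*u) ((1+2*u)-(1-5*u)) (by ring)
    have p1 := (pow_dvd_pow_of_dvd (⟨1, by ring⟩ : 7*u ∣ (1+2*u)-(1-5*u)) (a+b+1)).trans p
    have := ((hK _ h3).mul_right (PP b a M (-((1+2*u)-(1-5*u))) (1+2*u))).sub p1
    apply (hc.pow (m := a+b+1) (n := x)).dvd_of_dvd_mul_left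
    refine this.trans (dvd_of_eq ?_)
    ring
  have k : (2:ℝ)^(13.4:ℝ) ≤ ((7*u:ℤ):ℝ) := by
    refine (rp' 11025 13.4 5 67 (by norm_num) (by norm_num) (by norm_num) (by norm_num)).trans ?_
    push_cast; linarith
  refine closing a b M y x hM1 hM2 hay (1+2*u) (1-5*u) (by omega) (by omega)
    1 1 (7*u) (by norm_num) (by omega) 13.4 1 0.52 0.77 0 1 (-0.8) 1.46 0 0 0 k
    (PP_bound _ _ _ (5/7) 1 2 2 1 0.52 0.77 (by push_cast; linarith) (by norm_num) (by norm_num)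
      (by norm_num) (by norm_num) (by norm_num) ?_ ?_ (by norm_num) ?_ ?_)
    (PP_bound _ _ _ (2.001/7) 1 2 2 1 (-0.8) 1.46 (by push_cast; linarith) (by norm_num)
      (by norm_num) (by norm_num) (by norm_num) (by norm_num) ?_ ?_ (by norm_num) ?_ ?_)
    (by norm_num) (by norm_num) (by omega) (by omega) ?_ (by norm_num) ?_ (by norm_num)
    (hdiv _ _ _ hM1 hM2 (by omega)) ?_
  · push_cast; rw [abs_le]; constructor <;> linarith
  · push_cast; rw [abs_le]; constructor <;> linarith
  · exact rp _ _ 25 13 (by norm_num) (by norm_num) (by norm_num)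
  · exact rp _ _ 100 77 (by norm_num) (by norm_num) (by norm_num)
  · push_cast; rw [abs_le]; constructor <;> linarith
  · push_cast; rw [abs_le]; constructor <;> linarith
  · exact rp _ _ 5 (-4) (by norm_num) (by norm_num) (by norm_num)
  · exact rp _ _ 50 73 (by norm_num) (by norm_num) (by norm_num)
  · push_cast; linarith
  · push_cast; linarith
  · rw [show a+b+3 = (a+1)+(b+1)+1 by omega]
    exact hdiv (a+1) (b+1) (M+1) (by omega) (by omega) (by omega)

lemma general (n : ℕ) (hn : 15 ≤ n) (x y z : ℕ) (hz : 0 < z) (hodd : Odd x) (hx : 0 < x)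
    (heq : (35 * n ^ 2 - 1) ^ x + (14 * n ^ 2 + 1) ^ y = (7 * n) ^ z)
    (hdvd : 7 * n^2 ∣ 5 * x + 2 * y) : False := by
  have hn2 : 225 ≤ n^2 := by nlinarith
  obtain ⟨b1, b2, b3⟩ := size_bounds (7*n^2) (7*n) (35*n^2-1) (14*n^2+1) x y z (by omega) (by ring)
    (by omega) (by ring) heq hz
  have hle := Nat.le_of_dvd (by omega) hdvd
  obtain ⟨w, hw⟩ : ∃ w, w = z/2 := ⟨_, rfl⟩
  have hw207 : 207 ≤ w := by omega
  have hu : (1575:ℤ) ≤ 7*(n:ℤ)^2 := by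
    have : (225:ℤ) ≤ (n:ℤ)^2 := by exact_mod_cast hn2
    linarith
  set u : ℤ := 7*(n:ℤ)^2 with hudef
  have heqZ : (1+2*u)^y - (1-5*u)^x = (7*(n:ℤ))^z := by
    have h1 : ((35*n^2-1 : ℕ):ℤ) = -(1-5*u) := by
      rw [Nat.cast_sub (by omega)]; push_cast; rw [hudef]; ring
    have h2 := congrArg (Nat.cast : ℕ → ℤ) heq
    rw [Nat.cast_add, Nat.cast_pow, h1, hodd.neg_pow] at h2
    push_cast at h2
    rw [← h2, hudef]; ring
  have hK : ∀ K ≤ w, (7*u)^K ∣ (1+2*u)^y - (1-5*u)^x := by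
    intro K hKw
    rw [heqZ, show 7*u = (7*(n:ℤ))^2 by rw [hudef]; ring, ← pow_mul]
    exact pow_dvd_pow _ (by omega)
  have hc : IsCoprime (7*u) (1-5*u) := by
    have h1 : IsCoprime u (1-5*u) := ⟨5, 1, by ring⟩
    have h7 : IsCoprime (7:ℤ) (1-5*u) := ⟨5*(n:ℤ)^2, 1, by rw [hudef]; ring⟩
    exact h7.mul_left h1
  have c6 : (207:ℝ) ≤ w := by exact_mod_cast hw207
  by_cases hxy : x ≤ y
  · by_cases h : 20*x ≤ 9*w
    · exact case1 u hu x y w hw207 hK (by omega) (by omega) h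
    · obtain ⟨b, hb1, hb2⟩ : ∃ b, 2*b+(y-x)+3 ≤ w ∧ w < 2*b+(y-x)+5 :=
        ⟨(w-(y-x)-3)/2, by omega, by omega⟩
      obtain ⟨e, rfl⟩ := Nat.exists_eq_add_of_le hxy
      rw [Nat.add_sub_cancel_left] at hb1 hb2
      have c1 : (12:ℝ)*(x+e) ≤ 14*w+7 := by
        have : 12*(x+e) ≤ 14*w+7 := by omega
        exact_mod_cast this
      have c3 : (9:ℝ)*w ≤ 20*x := by
        have : 9*w ≤ 20*x := by omega
        exact_mod_cast this
      have c4 : (2:ℝ)*b+e+3 ≤ w := by exact_mod_cast hb1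
      have c5 : (w:ℝ)+1 ≤ 2*b+e+5 := by exact_mod_cast hb2
      have c7 : (0:ℝ) ≤ e := by positivity
      have c8 : (w:ℝ) ≤ x+e := by
        have : w ≤ x+e := by omega
        exact_mod_cast this
      exact case3 u hu x (x+e) w hK hc (b+e) b (x+e+b) rfl (by omega) (by omega) (by omega)
        (by push_cast; linarith) (by push_cast; linarith)
  · by_cases h : 4*y ≤ w
    · exact case2 u hu x y w hw207 hK (by omega) (by omega) h
    · obtain ⟨a, ha1, ha2⟩ : ∃ a, 2*a+(x-y)+3 ≤ w ∧ w < 2*a+(x-y)+5 :=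
        ⟨(w-(x-y)-3)/2, by omega, by omega⟩
      obtain ⟨e, rfl⟩ := Nat.exists_eq_add_of_le (by omega : y ≤ x)
      rw [Nat.add_sub_cancel_left] at ha1 ha2
      have c1 : (40:ℝ)*(y+e) ≤ 42*w+21 := by
        have : 40*(y+e) ≤ 42*w+21 := by omega
        exact_mod_cast this
      have c3 : (w:ℝ) ≤ 4*y := by
        have : w ≤ 4*y := by omega
        exact_mod_cast this
      have c4 : (2:ℝ)*a+e+3 ≤ w := by exact_mod_cast ha1
      have c5 : (w:ℝ)+1 ≤ 2*a+e+5 := by exact_mod_cast ha2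
      have c7 : (0:ℝ) ≤ e := by positivity
      have c8 : (w:ℝ) ≤ y+e := by
        have : w ≤ y+e := by omega
        exact_mod_cast this
      exact case3 u hu (y+e) y w hK hc a (a+e) (y+e+a) (by omega) rfl (by omega) (by omega)
        (by push_cast; linarith) (by push_cast; linarith)

theorem stmt_1 (n : ℕ) (hn : 0 < n)
    (h5 : n % 5 = 3 ∨ n % 5 = 2 ∨ 5 ∣ n)
    (x y z : ℕ) (hx : 0 < x) (hy : 0 < y) (hz : 0 < z)
    (heq : (35 * n ^ 2 - 1) ^ x + (14 * n ^ 2 + 1) ^ y = (7 * n) ^ z) :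
    x = 1 ∧ y = 1 ∧ z = 2 := by
  rcases base n (by omega) x y z hx hy hz heq with h | ⟨hz4, hodd, hdvd⟩
  · exact h
  · exfalso
    by_cases hev : 2 ∣ n
    · have h1 : 2 ∣ 5*x+2*y := (Dvd.dvd.mul_left (Dvd.dvd.pow hev (by norm_num)) 7).trans hdvd
      obtain ⟨k, hk⟩ := hodd
      omega
    · by_cases h15 : 15 ≤ n
      · exact general n h15 x y z hz hodd hx heq hdvd
      · have : n = 3 ∨ n = 5 ∨ n = 7 ∨ n = 13 := by omega
        rcases this with rfl | rfl | rfl | rfl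
        · exact small3 x y z hodd hy hz hdvd (by simpa using heq)
        · exact small5 x y z hodd hy hz hdvd (by simpa using heq)
        · exact small7 x y z hodd hy hz hdvd (by simpa using heq)
        · exact small13 x y z hodd hy hz hdvd (by simpa using heq)
end

section
/- Let p be a prime with p > 3 and p ≡ 3 (mod 4), and let n be a positive integer. If positive integers x, y, z satisfy (5pn² − 1)^x + (p(p−5)n² + 1)^y = (pn)^z, then x is odd. -/
theorem stmt_2 (p n : ℕ) (hp : p.Prime) (hp3 : 3 < p) (hp4 : p % 4 = 3)
    (hn : 0 < n)
    (x y z : ℕ) (hx : 0 < x) (hy : 0 < y) (hz : 0 < z)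
    (heq : (5 * p * n ^ 2 - 1) ^ x + (p * (p - 5) * n ^ 2 + 1) ^ y = (p * n) ^ z) :
    Odd x := by
  by_contra hodd
  rw [Nat.not_odd_iff_even] at hodd
  have h1 : 1 ≤ 5 * p * n ^ 2 := by
    have : 0 < 5 * p * n ^ 2 := by positivity
    exact this
  have h := congrArg (Nat.cast : ℕ → ZMod p) heq
  rw [Nat.cast_add, Nat.cast_pow, Nat.cast_sub h1] at h
  simp only [Nat.cast_add, Nat.cast_mul, Nat.cast_pow, CharP.cast_eq_zero, mul_zero, zero_mul,
    zero_add, zero_sub, Nat.cast_one, one_pow, hodd.neg_pow, zero_pow hz.ne'] at h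
  have h2 : ((2 : ℕ) : ZMod p) = 0 := by
    rw [← h]; norm_num
  rw [ZMod.natCast_eq_zero_iff] at h2
  have := Nat.le_of_dvd (by norm_num) h2
  omega
end

section
/- Let p be a prime with p > 3 and p ≡ 3 (mod 4), and let n be an odd positive integer with pn ≡ ±1 (mod 5). If positive integers x, y, z satisfy (5pn² − 1)^x + (p(p−5)n² + 1)^y = (pn)^z, then x = 1. -/
theorem stmt_3 (p n : ℕ) (hp : p.Prime) (hp3 : 3 < p) (hp4 : p % 4 = 3)
    (hn : 0 < n) (hodd : Odd n) (h5 : p * n % 5 = 1 ∨ p * n % 5 = 4)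
    (x y z : ℕ) (hx : 0 < x) (hy : 0 < y) (hz : 0 < z)
    (heq : (5 * p * n ^ 2 - 1) ^ x + (p * (p - 5) * n ^ 2 + 1) ^ y = (p * n) ^ z) :
    x = 1 := by
  obtain ⟨q, rfl⟩ : ∃ q, p = q + 5 := ⟨p - 5, by omega⟩
  have hq4 : q % 4 = 2 := by omega
  rw [Nat.add_sub_cancel] at heq
  have hpos : 1 ≤ 5 * (q + 5) * n ^ 2 := Nat.succ_le_of_lt (by positivity)
  obtain ⟨A, hA⟩ : ∃ A, 5 * (q + 5) * n ^ 2 = A + 1 := ⟨5 * (q + 5) * n ^ 2 - 1, by omega⟩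
  obtain ⟨B, hB⟩ : ∃ B, (q + 5) * q * n ^ 2 + 1 = B := ⟨_, rfl⟩
  obtain ⟨C, hC⟩ : ∃ C, (q + 5) * n = C := ⟨_, rfl⟩
  rw [hA, hB, hC, Nat.add_sub_cancel] at heq
  have hAB : A + B = C ^ 2 := by
    have : A + 1 + B = C ^ 2 + 1 := by rw [← hA, ← hB, ← hC]; ring
    omega
  -- `x` is odd
  have hxodd : Odd x := by
    by_contra hne
    rw [Nat.not_odd_iff_even] at hne
    have hpz : ((C ^ z : ℕ) : ZMod (q + 5)) = 0 := by
      rw [ZMod.natCast_eq_zero_iff, ← hC]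
      exact dvd_pow (Dvd.intro _ rfl) hz.ne'
    have hA' : (A : ZMod (q + 5)) = -1 := by
      have h : ((A + 1 : ℕ) : ZMod (q + 5)) = 0 := by
        rw [ZMod.natCast_eq_zero_iff, ← hA]
        exact ⟨5 * n ^ 2, by ring⟩
      push_cast at h
      exact eq_neg_of_add_eq_zero_left h
    have hB' : (B : ZMod (q + 5)) = 1 := by
      have h : (((q + 5) * q * n ^ 2 : ℕ) : ZMod (q + 5)) = 0 := by
        rw [ZMod.natCast_eq_zero_iff]
        exact ⟨q * n ^ 2, by ring⟩
      rw [← hB, Nat.cast_add, h]; simp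
    rw [← heq] at hpz
    push_cast at hpz
    rw [hA', hB', hne.neg_one_pow, one_pow] at hpz
    have h2 : ((2 : ℕ) : ZMod (q + 5)) = 0 := by
      push_cast; rw [← hpz]; norm_num
    rw [ZMod.natCast_eq_zero_iff] at h2
    have := Nat.le_of_dvd (by norm_num) h2
    omega
  -- `y` is odd
  have hC5 : (C : ZMod 5) = 1 ∨ (C : ZMod 5) = -1 := by
    rw [hC] at h5
    rcases h5 with h | h
    · left; rw [← ZMod.natCast_mod, h]; rfl
    · right; rw [← ZMod.natCast_mod, h]; rfl
  have hA5 : (A : ZMod 5) = -1 := by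
    have h : ((A + 1 : ℕ) : ZMod 5) = 0 := by
      rw [ZMod.natCast_eq_zero_iff, ← hA]
      exact ⟨(q + 5) * n ^ 2, by ring⟩
    push_cast at h
    exact eq_neg_of_add_eq_zero_left h
  have hB5 : (B : ZMod 5) = 2 := by
    have h : ((A + B : ℕ) : ZMod 5) = ((C ^ 2 : ℕ) : ZMod 5) := by rw [hAB]
    push_cast at h
    have hc2 : (C : ZMod 5) ^ 2 = 1 := by rcases hC5 with h | h <;> rw [h] <;> rfl
    rw [hA5, hc2] at h
    have : (B : ZMod 5) = 1 + 1 := by linear_combination h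
    rw [this]; rfl
  have h5eq : (2 : ZMod 5) ^ y = 1 + (C : ZMod 5) ^ z := by
    have h : ((A ^ x + B ^ y : ℕ) : ZMod 5) = ((C ^ z : ℕ) : ZMod 5) := by rw [heq]
    push_cast at h
    rw [hA5, hB5, hxodd.neg_one_pow] at h
    rw [← h]; ring
  have hCz : (C : ZMod 5) ^ z = 1 ∨ (C : ZMod 5) ^ z = -1 := by
    rcases hC5 with h | h
    · left; rw [h, one_pow]
    · rw [h]; exact neg_one_pow_eq_or _ z
  have hyodd : Odd y := by
    by_contra hne
    rw [Nat.not_odd_iff_even] at hne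
    obtain ⟨k, rfl⟩ := hne
    have h4 : (2 : ZMod 5) ^ (k + k) = (-1) ^ k := by
      rw [← two_mul, pow_mul]; rfl
    rw [h4] at h5eq
    rcases neg_one_pow_eq_or (ZMod 5) k with h | h <;> rcases hCz with h' | h' <;>
      rw [h, h'] at h5eq <;> revert h5eq <;> decide
  by_contra hx1
  have hx2 : 2 ≤ x := by omega
  -- residues modulo `4`
  have hn4 : n ^ 2 % 4 = 1 := by
    obtain ⟨k, rfl⟩ := hodd
    have : (2 * k + 1) ^ 2 = 4 * (k ^ 2 + k) + 1 := by ring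
    omega
  have hB4 : B % 4 = 3 := by
    rw [← hB]; simp [Nat.add_mod, Nat.mul_mod, hn4, hq4]
  have hA2 : 2 ∣ A := by
    have : (A + 1) % 4 = 3 := by rw [← hA]; simp [Nat.add_mod, Nat.mul_mod, hn4, hq4]
    omega
  have hAx : 4 ∣ A ^ x := (pow_dvd_pow_of_dvd hA2 2).trans (pow_dvd_pow A hx2)
  have hBy : B ^ y % 4 = 3 := by
    obtain ⟨k, rfl⟩ := hyodd
    rw [Nat.pow_mod, hB4, pow_succ, pow_mul, Nat.mul_mod, Nat.pow_mod]; simp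
  have hCz4 : C ^ z % 4 = 3 := by omega
  have hzodd : Odd z := by
    by_contra hne
    rw [Nat.not_odd_iff_even] at hne
    obtain ⟨k, hk⟩ := hne
    rw [hk, ← two_mul, mul_comm, pow_mul, sq, Nat.mul_mod] at hCz4
    have : C ^ k % 4 < 4 := Nat.mod_lt _ (by norm_num)
    interval_cases C ^ k % 4 <;> omega
  have hC4 : C % 4 = 3 := by
    obtain ⟨k, rfl⟩ := hzodd
    rw [pow_succ, mul_comm 2 k, pow_mul, sq, Nat.mul_mod, Nat.mul_mod (C ^ k)] at hCz4
    have h1 : C ^ k % 4 < 4 := Nat.mod_lt _ (by norm_num)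
    have h2 : C % 4 < 4 := Nat.mod_lt _ (by norm_num)
    interval_cases C ^ k % 4 <;> omega
  -- Jacobi symbols
  have hBC : B = C * (q * n) + 1 := by rw [← hB, ← hC]; ring
  have hJ1 : jacobiSym (B : ℤ) C = 1 := by
    rw [jacobiSym.mod_left' (a₂ := 1), jacobiSym.one_left]
    rw [hBC]; push_cast; simp [Int.mul_add_emod_self_left]
  have hrec := jacobiSym.quadratic_reciprocity_three_mod_four hC4 hB4
  rw [hJ1] at hrec
  have hAJ : jacobiSym (A : ℤ) B = 1 := by
    rw [jacobiSym.mod_left' (a₂ := (C : ℤ) ^ 2), jacobiSym.pow_left, hrec]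
    · norm_num
    · have : (C : ℤ) ^ 2 = A + B := by exact_mod_cast hAB.symm
      rw [this]; simp
  have h1 : jacobiSym ((A : ℤ) ^ x) B = jacobiSym ((C : ℤ) ^ z) B := by
    apply jacobiSym.mod_left'
    have : (C : ℤ) ^ z = A ^ x + B ^ y := by exact_mod_cast heq.symm
    rw [this]
    have hd : (B : ℤ) ∣ (B : ℤ) ^ y := dvd_pow_self _ hy.ne'
    obtain ⟨t, ht⟩ := hd
    rw [ht]; simp
  rw [jacobiSym.pow_left, jacobiSym.pow_left, hAJ, hrec, hzodd.neg_one_pow] at h1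
  simp at h1
end

section
/- Let p be a prime with p > 3 and p ≡ 3 (mod 4), and let n be an even positive integer. If positive integers x, y, z satisfy (5pn² − 1)^x + (p(p−5)n² + 1)^y = (pn)^z, then (x, y, z) = (1, 1, 2). -/
lemma pow_expand (t : ℤ) (k : ℕ) : ∃ c : ℤ, (1 + t) ^ k = 1 + k * t + t ^ 2 * c := by
  induction k with
  | zero => exact ⟨0, by simp⟩
  | succ k ih =>
    obtain ⟨c, hc⟩ := ih
    refine ⟨k + c + t * c, ?_⟩
    rw [pow_succ, hc]
    push_cast
    ring

theorem stmt_4 (p n : ℕ) (hp : p.Prime) (hp3 : 3 < p) (hp4 : p % 4 = 3)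
    (hn : 0 < n) (heven : Even n)
    (x y z : ℕ) (hx : 0 < x) (hy : 0 < y) (hz : 0 < z)
    (heq : (5 * p * n ^ 2 - 1) ^ x + (p * (p - 5) * n ^ 2 + 1) ^ y = (p * n) ^ z) :
    x = 1 ∧ y = 1 ∧ z = 2 := by
  obtain ⟨q, rfl⟩ : ∃ q, p = q + 5 := ⟨p - 5, by omega⟩
  have hq : q % 4 = 2 := by omega
  rw [Nat.add_sub_cancel] at heq
  have hn2 : 1 ≤ n ^ 2 := Nat.one_le_pow _ _ hn
  obtain ⟨A, hA⟩ : ∃ A, 5 * (q + 5) * n ^ 2 = A + 1 :=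
    ⟨5 * (q + 5) * n ^ 2 - 1, by
      have : 0 < 5 * (q + 5) * n ^ 2 := by positivity
      omega⟩
  rw [hA, Nat.add_sub_cancel] at heq
  obtain ⟨B, hB⟩ : ∃ B, B = (q + 5) * q * n ^ 2 + 1 := ⟨_, rfl⟩
  rw [← hB] at heq
  have hA2 : 2 ≤ A := by nlinarith
  have hB2 : 2 ≤ B := by
    have : 0 < (q + 5) * q * n ^ 2 := by
      have : 0 < q := by omega
      positivity
    omega
  have hAB : A + B = ((q + 5) * n) ^ 2 := by
    have : A + 1 + B = ((q + 5) * n) ^ 2 + 1 := by rw [← hA, hB]; ring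
    omega
  have hAx : A ≤ A ^ x := Nat.le_self_pow hx.ne' A
  have hBy : B ≤ B ^ y := Nat.le_self_pow hy.ne' B
  have hpn : 2 ≤ (q + 5) * n := by nlinarith
  rcases lt_trichotomy z 2 with h | h | h
  · have : z = 1 := by omega
    subst this
    nlinarith
  · subst h
    have h1 : A ^ x = A ^ 1 := by rw [pow_one]; omega
    have h2 : B ^ y = B ^ 1 := by rw [pow_one]; omega
    exact ⟨Nat.pow_right_injective hA2 h1, Nat.pow_right_injective hB2 h2, rfl⟩
  · exfalso
    obtain ⟨w, rfl⟩ : ∃ w, z = w + 3 := ⟨z - 3, by omega⟩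
    obtain ⟨m, hm⟩ := heven
    obtain ⟨r, hr⟩ : ∃ r, q = 2 * r := ⟨q / 2, by omega⟩
    obtain ⟨c, hc⟩ := pow_expand (-(5 * (q + 5) * n ^ 2)) x
    obtain ⟨d, hd⟩ := pow_expand ((q + 5) * q * n ^ 2) y
    have hAz : (A : ℤ) = 5 * (q + 5) * n ^ 2 - 1 := by
      have : (5 * (q + 5) * n ^ 2 : ℤ) = A + 1 := by exact_mod_cast hA
      linarith
    have hBz : (B : ℤ) = 1 + (q + 5) * q * n ^ 2 := by rw [hB]; push_cast; ring
    have hez : (A : ℤ) ^ x + (B : ℤ) ^ y = ((q + 5) * n) ^ (w + 3) := by exact_mod_cast heq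
    rw [hBz, hd, mul_pow _ _ (w + 3), pow_add (n : ℤ)] at hez
    have hneg : (A : ℤ) = -(1 + -(5 * (q + 5) * n ^ 2)) := by rw [hAz]; ring
    have hnz : (n : ℤ) = 2 * m := by rw [hm]; push_cast; ring
    have hqz : (q : ℤ) = 2 * r := by rw [hr]; push_cast; ring
    obtain ⟨K, hK⟩ : ∃ K : ℤ, K = ((q : ℤ) + 5) ^ (w + 3) * (n : ℤ) ^ w := ⟨_, rfl⟩
    rw [← mul_assoc (_ ^ (w + 3)), ← hK, hneg] at hez
    rcases Nat.even_or_odd x with hxe | hxo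
    · rw [hxe.neg_pow, hc, hnz] at hez
      have : (2 : ℤ) = 4 * (5 * (q + 5) * m ^ 2 * x - (5 * (q + 5)) ^ 2 * m ^ 4 * 4 * c
        - y * (q + 5) * q * m ^ 2 - ((q + 5) * q) ^ 2 * m ^ 4 * 4 * d + K * 2 * m ^ 3) := by
        linear_combination hez
      omega
    · rw [hxo.neg_pow, hc] at hez
      have hn0 : (n : ℤ) ^ 2 ≠ 0 := by positivity
      have key : (5 * (q + 5) * x : ℤ) + y * (q + 5) * q
          = n * (K + (5 * (q + 5)) ^ 2 * n * c - ((q + 5) * q) ^ 2 * n * d) := by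
        apply mul_left_cancel₀ hn0
        linear_combination hez
      obtain ⟨s, hs⟩ := hxo
      have hsz : (x : ℤ) = 2 * s + 1 := by rw [hs]; push_cast; ring
      rw [hnz, hsz, hqz] at key
      have : (1 : ℤ) = 2 * (m * (K + (5 * (2 * r + 5)) ^ 2 * (2 * m) * c
          - ((2 * r + 5) * (2 * r)) ^ 2 * (2 * m) * d)
          - y * (2 * r + 5) * r - 5 * r * (2 * s + 1) - 25 * s - 12) := by
        linear_combination key
      omega
end

section
/- Let p be a prime with p > 3 and p ≡ 3 (mod 4), and let n be a positive integer with n ≡ 1 (mod 4). Then the Jacobi symbol (5pn² − 1 / p(p−5)n² + 1) equals 1. -/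
theorem stmt_5 (p n : ℕ) (hp : p.Prime) (hp3 : 3 < p) (hp4 : p % 4 = 3)
    (hn : 0 < n) (hn4 : n % 4 = 1) :
    jacobiSym (5 * (p : ℤ) * (n : ℤ) ^ 2 - 1) (p * (p - 5) * n ^ 2 + 1) = 1 := by
  obtain ⟨k, rfl⟩ : ∃ k, p = k + 5 := ⟨p - 5, by omega⟩
  rw [Nat.add_sub_cancel]
  have key : (5 * ((k + 5 : ℕ) : ℤ) * (n : ℤ) ^ 2 - 1) % (((k + 5) * k * n ^ 2 + 1 : ℕ) : ℤ)
      = ((((k + 5 : ℕ) : ℤ) * n) ^ 2) % (((k + 5) * k * n ^ 2 + 1 : ℕ) : ℤ) := by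
    apply Int.emod_emod_of_dvd _ (dvd_refl _) |>.symm.trans
    rw [Int.emod_emod_of_dvd _ (dvd_refl _)]
    apply Int.ModEq.symm
    apply Int.ModEq.symm
    apply (Int.modEq_iff_dvd).2
    exact ⟨1, by push_cast; ring⟩
  rw [jacobiSym.mod_left' key]
  apply jacobiSym.sq_one'
  rw [← Int.isCoprime_iff_gcd_eq_one]
  exact ⟨-(k * n), 1, by push_cast; ring⟩
end

section
/- Let p be a prime with p > 3 and p ≡ 3 (mod 4), and let n be a positive integer with n ≡ 1 (mod 4). Then the Jacobi symbol (pn / p(p−5)n² + 1) equals −1. -/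
theorem stmt_6 (p n : ℕ) (hp : p.Prime) (hp3 : 3 < p) (hp4 : p % 4 = 3)
    (hn : 0 < n) (hn4 : n % 4 = 1) :
    jacobiSym ((p : ℤ) * (n : ℤ)) (p * (p - 5) * n ^ 2 + 1) = -1 := by
  have h1 : (p * n) % 4 = 3 := by rw [Nat.mul_mod, hp4, hn4]
  have h5 : (p - 5) % 4 = 2 := by omega
  have h2 : (p * (p - 5) * n ^ 2 + 1) % 4 = 3 := by
    have : (p * (p - 5) * n ^ 2) % 4 = 2 := by
      rw [Nat.mul_mod, Nat.mul_mod p, Nat.pow_mod, hp4, hn4, h5]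
    omega
  rw [← Nat.cast_mul, jacobiSym.quadratic_reciprocity_three_mod_four h1 h2]
  have h3 : jacobiSym ((p * (p - 5) * n ^ 2 + 1 : ℕ) : ℤ) (p * n) = jacobiSym 1 (p * n) := by
    apply jacobiSym.mod_left'
    have : ((p * (p - 5) * n ^ 2 + 1 : ℕ) : ℤ)
        = 1 + ((p * n : ℕ) : ℤ) * (((p - 5) * n : ℕ) : ℤ) := by
      norm_cast
      ring
    rw [this, Int.add_mul_emod_self_left]
  rw [h3, jacobiSym.one_left]
end

section
/- Let p be a prime with p > 3 and p ≡ 3 (mod 4), and let n be a positive integer with n ≡ 1 (mod 4). If positive integers x, y, z satisfy (5pn² − 1)^x + (p(p−5)n² + 1)^y = (pn)^z, then z is even. -/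
theorem stmt_7 (p n : ℕ) (hp : p.Prime) (hp3 : 3 < p) (hp4 : p % 4 = 3)
    (hn : 0 < n) (hn4 : n % 4 = 1)
    (x y z : ℕ) (hx : 0 < x) (hy : 0 < y) (hz : 0 < z)
    (heq : (5 * p * n ^ 2 - 1) ^ x + (p * (p - 5) * n ^ 2 + 1) ^ y = (p * n) ^ z) :
    Even z := by
  obtain ⟨q, rfl⟩ : ∃ q, p = q + 5 := ⟨p - 5, by omega⟩
  have hq4 : q % 4 = 2 := by omega
  rw [Nat.add_sub_cancel] at heq
  set C := (q + 5) * n with hC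
  set B := (q + 5) * q * n ^ 2 + 1 with hB
  have hA1 : 1 ≤ 5 * (q + 5) * n ^ 2 := Nat.succ_le_of_lt (by positivity)
  have hAB : 5 * (q + 5) * n ^ 2 - 1 + B = C ^ 2 := by
    have h : 5 * (q + 5) * n ^ 2 + (q + 5) * q * n ^ 2 = C ^ 2 := by rw [hC]; ring
    omega
  set A := 5 * (q + 5) * n ^ 2 - 1 with hA
  have hC4 : C % 4 = 3 := by rw [hC, Nat.mul_mod, hp4, hn4]
  have hB4 : B % 4 = 3 := by
    rw [hB]; simp [Nat.add_mod, Nat.mul_mod, Nat.pow_mod, hq4, hn4]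
  have hBC : B = C * (q * n) + 1 := by rw [hB, hC]; ring
  have hrec : jacobiSym (C : ℤ) B = -1 := by
    rw [jacobiSym.quadratic_reciprocity_three_mod_four hC4 hB4]
    have : jacobiSym (B : ℤ) C = 1 := by
      rw [jacobiSym.mod_left, hBC]
      push_cast
      rw [Int.mul_add_emod_self_left, ← jacobiSym.mod_left, jacobiSym.one_left]
    rw [this]
  have h1 : jacobiSym ((C : ℤ) ^ z) B = jacobiSym (((C : ℤ) ^ 2) ^ x) B := by
    apply jacobiSym.mod_left'
    have hm : (A : ℤ) ≡ (C : ℤ) ^ 2 [ZMOD B] := by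
      rw [Int.modEq_iff_dvd]
      exact ⟨1, by have : (A : ℤ) + B = (C : ℤ) ^ 2 := by exact_mod_cast hAB
                   linarith⟩
    have hz' : (C : ℤ) ^ z ≡ (A : ℤ) ^ x [ZMOD B] := by
      have h : (A : ℤ) ^ x + (B : ℤ) ^ y = (C : ℤ) ^ z := by exact_mod_cast heq
      apply Int.ModEq.symm
      rw [Int.modEq_iff_dvd, ← h, add_sub_cancel_left]
      exact dvd_pow_self _ hy.ne'
    exact hz'.trans (hm.pow x)
  rw [jacobiSym.pow_left, jacobiSym.pow_left, jacobiSym.pow_left, hrec] at h1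
  by_contra hodd
  rw [Nat.not_even_iff_odd] at hodd
  rw [hodd.neg_one_pow] at h1
  norm_num at h1
end

section
/- Let p be a prime with p > 3 and p ≡ 3 (mod 4), and let n be a positive integer. Set u = 5pn² − 1, v = p(p−5)n² + 1 and w = pn. If positive integers y, z with y ≥ 3 satisfy w^z − v^y = u, then y < 2521·log(pn), where log denotes the natural logarithm. -/
open Finset in
lemma comb_sum {ι : Type*} [Fintype ι] [DecidableEq ι] (N : ℕ) (hN : Fintype.card ι = N)
    (r : ι → Fin N)
    (h : ∀ i j, i ≠ j → r i = r j → (r i : ℕ) = N - 1) :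
    ∑ j ∈ range N, j ≤ ∑ i, (r i : ℕ) := by
  rcases N with _ | M
  · simp
  have h1 : ∀ i, (r i : ℕ) = ∑ j ∈ range M, if j < (r i : ℕ) then 1 else 0 := by
    intro i
    rw [← Finset.card_filter]
    have : (range M).filter (fun j => j < (r i : ℕ)) = range (r i : ℕ) := by
      ext j
      have := (r i).2
      simp only [mem_filter, mem_range]
      omega
    rw [this, card_range]
  rw [Finset.sum_congr rfl (fun i _ => h1 i), Finset.sum_comm]
  have h2 : ∑ j ∈ range (M + 1), j = ∑ j ∈ range M, (M - j) := by
    rw [Finset.sum_range_succ', ← Finset.sum_range_reflect]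
    simp only [add_zero]
    apply Finset.sum_congr rfl
    intro j hj
    simp only [mem_range] at hj
    omega
  rw [h2]
  apply Finset.sum_le_sum
  intro j hj
  simp only [mem_range] at hj
  rw [← Finset.card_filter]
  have h3 := Finset.card_filter_add_card_filter_not (s := (univ : Finset ι)) (fun i => j < (r i : ℕ))
  have h4 : #{i : ι | ¬ j < (r i : ℕ)} ≤ #(range (j + 1)) := by
    apply Finset.card_le_card_of_injOn (fun i => (r i : ℕ))
    · intro i hi
      simp at hi ⊢
      omega
    · intro a ha b hb hab
      by_contra hne
      have := h a b hne (Fin.ext hab)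
      simp at ha
      omega
  rw [card_range] at h4
  rw [Finset.card_univ, hN] at h3
  omega

lemma det_dvd {ι : Type*} [Fintype ι] [DecidableEq ι] (N : ℕ) (hN : Fintype.card ι = N)
    (A : Matrix ι ι ℤ) (q : ℤ) (d : ι → ℕ → ℤ) (g : ℕ → ι → ℤ) (h : ι → ι → ℤ)
    (hA : ∀ i j, A i j = ∑ m ∈ Finset.range (N - 1), d i m * q ^ m * g m j + q ^ (N - 1) * h i j) :
    q ^ (∑ j ∈ Finset.range N, j) ∣ A.det := by
  rcases N with _ | M
  · simp
  simp only [Nat.add_sub_cancel] at hA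
  let G : ι → Fin (M + 1) → ι → ℤ := fun i m => if (m : ℕ) < M then d i m • g m else h i
  have hrow : A = fun i => ∑ m : Fin (M + 1), (q ^ (m : ℕ)) • G i m := by
    ext i j
    rw [hA, Finset.sum_apply, Fin.sum_univ_castSucc, Finset.sum_range]
    simp [G, mul_assoc, mul_left_comm]
  have hdet : A.det = Matrix.detRowAlternating.toMultilinearMap
      (fun i => ∑ m : Fin (M + 1), (q ^ (m : ℕ)) • G i m) := by
    conv_lhs => rw [hrow]
    rfl
  rw [hdet, MultilinearMap.map_sum]
  apply Finset.dvd_sum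
  intro r _
  rw [MultilinearMap.map_smul_univ (Matrix.detRowAlternating.toMultilinearMap)
    (fun i => q ^ ((r i : Fin (M+1)) : ℕ)) (fun i => G i (r i))]
  by_cases hr : ∀ i j, i ≠ j → r i = r j → (r i : ℕ) = M
  · have := comb_sum (M + 1) hN r (by simpa using hr)
    rw [Finset.prod_pow_eq_pow_sum, smul_eq_mul]
    exact Dvd.dvd.mul_right (pow_dvd_pow q this) _
  · push Not at hr
    obtain ⟨i, j, hij, hrij, hM⟩ := hr
    have hlt : (r i : ℕ) < M := by have := (r i).2; omega
    have hz : Matrix.detRowAlternating.toMultilinearMap (fun i => G i (r i)) = 0 := by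
      change Matrix.det (Matrix.of fun i => G i (r i)) = 0
      have e1 : G i (r i) = d i (r i) • g (r i) := by simp [G, hlt]
      have e2 : G j (r j) = d j (r i) • g (r i) := by simp [G, ← hrij, hlt]
      by_cases h0 : d i (r i) = 0
      · apply Matrix.det_eq_zero_of_row_eq_zero i
        intro k
        simp [Matrix.of_apply, e1, h0]
      · apply Matrix.exists_vecMul_eq_zero_iff.mp
        refine ⟨Pi.single i (d j (r i)) - Pi.single j (d i (r i)), ?_, ?_⟩
        · intro hv
          have := congrFun hv j
          simp [Ne.symm hij] at this
          exact h0 this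
        · rw [Matrix.sub_vecMul, Matrix.single_vecMul, Matrix.single_vecMul]
          change d j (r i) • G i (r i) - d i (r i) • G j (r j) = 0
          rw [e1, e2, smul_smul, smul_smul, mul_comm, sub_self]
    rw [hz]; simp

lemma row_exp (q f Z : ℤ) (hZ : Z = 1 + q * f) (k x : ℕ) :
    q ^ k * ((x.choose k : ℤ) * Z ^ x) =
      ∑ m ∈ Finset.range (x + 1), (Z ^ k * (m.choose k : ℤ) * f ^ (m - k)) * q ^ m * (x.choose m : ℤ) := by
  rcases lt_or_ge x k with hx | hx
  · rw [Nat.choose_eq_zero_of_lt hx]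
    symm
    simp only [Nat.cast_zero, zero_mul, mul_zero]
    apply Finset.sum_eq_zero
    intro m hm
    rw [Nat.choose_eq_zero_of_lt (n := m)]
    · simp
    · simp at hm; omega
  · obtain ⟨t, rfl⟩ := Nat.exists_eq_add_of_le hx
    rw [show k + t + 1 = k + (t + 1) by ring, Finset.sum_range_add]
    rw [Finset.sum_eq_zero (s := Finset.range k), zero_add]
    · rw [pow_add Z]
      have : Z ^ t = ∑ i ∈ Finset.range (t + 1), (q * f) ^ i * (t.choose i : ℤ) := by
        rw [hZ, add_comm 1, add_pow]
        simp
      conv_lhs => rw [this]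
      simp only [Finset.mul_sum]
      apply Finset.sum_congr rfl
      intro i hi
      simp at hi
      have h := Nat.choose_mul (n := k + t) (k := k + i) (s := k) (by omega) 
      simp at h
      have h' : ((k + t).choose (k+i) : ℤ) * ((k + i).choose k) = (k+t).choose k * t.choose i := by exact_mod_cast h
      rw [mul_pow, Nat.add_sub_cancel_left, pow_add]
      linear_combination (-(q^k * Z^k * q^i * f^i)) * h'
    · intro m hm
      rw [Nat.choose_eq_zero_of_lt (n := m)]
      · simp
      · simpa using hm

lemma superfact (K : ℕ) : K ^ (∑ k ∈ Finset.range K, k) ≤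
    7 ^ (∑ k ∈ Finset.range K, k) * ∏ k ∈ Finset.range K, k.factorial := by
  induction K with
  | zero => simp
  | succ K ih =>
    rcases Nat.eq_zero_or_pos K with rfl | hK
    · simp
    rcases Nat.lt_or_ge K 2 with hK2 | hK2
    · obtain rfl : K = 1 := by omega
      decide
    rw [Finset.sum_range_succ, Finset.prod_range_succ]
    set s := ∑ k ∈ Finset.range K, k with hs
    have hs2 : 2 * s + K = K * K := by
      have := Finset.sum_range_id_mul_two K
      rw [← hs] at this
      obtain ⟨t, rfl⟩ : ∃ t, K = t + 1 := ⟨K - 1, by omega⟩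
      simp at this
      nlinarith
    -- (K+1)^(s+K) ≤ K^s * 7^K * K!
    have hmain : (K + 1) ^ (s + K) ≤ K ^ s * (7 ^ K * K.factorial) := by
      have hKr : (0 : ℝ) < K := by exact_mod_cast hK
      have h1 : ((K : ℝ) + 1) ≤ K * Real.exp (1 / K) := by
        have := Real.add_one_le_exp (1 / (K : ℝ))
        calc (K : ℝ) + 1 = K * (1 / K + 1) := by field_simp; ring
          _ ≤ _ := by gcongr
      have h2 : (K : ℝ) ^ K ≤ Real.exp K * K.factorial := by
        have := Real.pow_div_factorial_le_exp (K : ℝ) hKr.le K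
        rwa [div_le_iff₀ (by positivity)] at this
      have h3 : Real.exp (1 / K) ^ (s + K) ≤ Real.exp (3 / 4) ^ K := by
        rw [← Real.exp_nat_mul, ← Real.exp_nat_mul]
        apply Real.exp_le_exp.mpr
        rw [mul_one_div, div_le_iff₀ hKr]
        have : 4 * (s + K : ℕ) ≤ 3 * (K * K) := by nlinarith
        have : (4 : ℝ) * (s + K : ℕ) ≤ 3 * (K * K) := by exact_mod_cast this
        linarith
      have h4 : Real.exp (3 / 4) * Real.exp 1 ≤ 7 := by
        rw [← Real.exp_add]
        refine le_of_pow_le_pow_left₀ (n := 4) (by norm_num) (by norm_num) ?_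
        rw [← Real.exp_nat_mul, show ((4 : ℕ) : ℝ) * (3 / 4 + 1) = (7 : ℕ) * 1 by norm_num,
          Real.exp_nat_mul]
        calc Real.exp 1 ^ 7 ≤ 3 ^ 7 := by
              have := Real.exp_one_lt_d9
              gcongr
              linarith
          _ ≤ _ := by norm_num
      have h5 : Real.exp K = Real.exp 1 ^ K := by rw [← Real.exp_nat_mul, mul_one]
      have : ((K : ℝ) + 1) ^ (s + K) ≤ K ^ s * (7 ^ K * K.factorial) := by
        calc ((K : ℝ) + 1) ^ (s + K) ≤ (K * Real.exp (1 / K)) ^ (s + K) := by gcongr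
          _ = K ^ s * K ^ K * Real.exp (1 / K) ^ (s + K) := by rw [mul_pow, pow_add]
          _ ≤ K ^ s * (Real.exp K * K.factorial) * Real.exp (3 / 4) ^ K := by gcongr
          _ = K ^ s * ((Real.exp (3 / 4) * Real.exp 1) ^ K * K.factorial) := by
              rw [h5, mul_pow]; ring
          _ ≤ _ := by gcongr
      exact_mod_cast this
    calc (K + 1) ^ (s + K) ≤ K ^ s * (7 ^ K * K.factorial) := hmain
      _ ≤ (7 ^ s * ∏ k ∈ Finset.range K, k.factorial) * (7 ^ K * K.factorial) := by gcongr
      _ = _ := by ring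
open Polynomial in
lemma coeff_prod_of_deg {ι : Type*} [DecidableEq ι] (s : Finset ι) (f : ι → ℚ[X]) (d : ι → ℕ)
    (h : ∀ i, (f i).natDegree ≤ d i) :
    (∏ i ∈ s, f i).natDegree ≤ ∑ i ∈ s, d i ∧
    (∏ i ∈ s, f i).coeff (∑ i ∈ s, d i) = ∏ i ∈ s, (f i).coeff (d i) := by
  induction s using Finset.induction_on with
  | empty => simp
  | insert a s ha ih =>
    rw [Finset.prod_insert ha, Finset.sum_insert ha, Finset.prod_insert ha]
    refine ⟨natDegree_mul_le.trans (add_le_add (h a) ih.1), ?_⟩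
    rw [coeff_mul_add_eq_of_natDegree_le (h a) ih.1, ih.2]

open Polynomial in
lemma det_coeff {t : ℕ} (M : Matrix (Fin t) (Fin t) ℚ[X]) (d : Fin t → ℕ)
    (h : ∀ i j, (M i j).natDegree ≤ d j) :
    M.det.natDegree ≤ ∑ j, d j ∧
    M.det.coeff (∑ j, d j) = Matrix.det (Matrix.of fun i j => (M i j).coeff (d j)) := by
  have hsg : ∀ σ : Equiv.Perm (Fin t),
      (((Equiv.Perm.sign σ : ℤ) : ℚ[X])) = C ((Equiv.Perm.sign σ : ℤ) : ℚ) := by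
    intro σ; simp
  constructor
  · rw [Matrix.det_apply']
    apply natDegree_sum_le_of_forall_le
    intro σ _
    rw [hsg]
    exact (natDegree_C_mul_le _ _).trans (coeff_prod_of_deg _ _ _ (fun i => h (σ i) i)).1
  · rw [Matrix.det_apply', Matrix.det_apply', finsetSum_coeff]
    apply Finset.sum_congr rfl
    intro σ _
    rw [hsg, coeff_C_mul, (coeff_prod_of_deg _ _ _ (fun i => h (σ i) i)).2]
    simp

open Polynomial in
lemma zero_lemma (a b : ℚ) (ha : 1 < a) (hb : b ≠ 0) (K L T y : ℕ) (hT : K * L ≤ T * T)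
    (hy : T ≤ y) (P : ℕ → ℚ[X]) (hdeg : ∀ l < L, (P l).natDegree < K)
    (hv : ∀ r < T + L, ∀ s < T,
      ∑ l ∈ Finset.range L, (P l).eval ((r : ℚ) + s * y) * (a ^ r * b ^ s) ^ l = 0) :
    ∀ l < L, P l = 0 := by
  by_contra hcon
  push Not at hcon
  obtain ⟨l0, hl0, hP0⟩ := hcon
  set F := (Finset.range L).filter (fun l => P l ≠ 0) with hF
  have hl0F : l0 ∈ F := by simp [hF, hl0, hP0]
  set t := F.card with ht
  have htL : t ≤ L := by
    have := Finset.card_filter_le (Finset.range L) (fun l => P l ≠ 0)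
    simpa using this
  let e : Fin t ≃ F := F.equivFin.symm
  have he : ∀ j, (e j : ℕ) < L ∧ P (e j) ≠ 0 := fun j => by
    have := Finset.mem_filter.mp (e j).2
    exact ⟨Finset.mem_range.mp this.1, this.2⟩
  let M : Matrix (Fin t) (Fin t) ℚ[X] :=
    Matrix.of fun i j => taylor ((i : ℕ) : ℚ) (P (e j)) * C ((a ^ (e j : ℕ)) ^ (i : ℕ))
  have hM : ∀ i j, (M i j).natDegree ≤ (P (e j)).natDegree := fun i j => by
    exact (natDegree_mul_C_le _ _).trans (natDegree_taylor _ _).le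
  obtain ⟨hd1, hd2⟩ := det_coeff M _ hM
  have hne : M.det ≠ 0 := by
    intro h0
    rw [h0, coeff_zero] at hd2
    have : (Matrix.of fun i j => (M i j).coeff ((P (e j)).natDegree)) =
        Matrix.of fun i j => (P (e j)).leadingCoeff * (Matrix.vandermonde (fun j => a ^ (e j : ℕ))).transpose i j := by
      ext i j
      simp only [M, Matrix.of_apply, coeff_mul_C, coeff_taylor_natDegree,
        Matrix.vandermonde_apply, Matrix.transpose_apply]
    rw [this, Matrix.det_mul_row, Matrix.det_transpose] at hd2
    rcases mul_eq_zero.mp hd2.symm with h | h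
    · obtain ⟨j, _, hj⟩ := Finset.prod_eq_zero_iff.mp h
      exact (he j).2 (leadingCoeff_eq_zero.mp hj)
    · revert h
      apply Matrix.det_vandermonde_ne_zero_iff.mpr
      intro i j hij
      have := pow_right_injective₀ (by linarith) (by linarith) hij
      exact e.injective (Subtype.ext this)
  let pts : Finset ℚ := (Finset.range T ×ˢ Finset.range T).image (fun x => (x.1 : ℚ) + x.2 * y)
  have hcard : pts.card = T * T := by
    rw [Finset.card_image_of_injOn]
    · simp
    · rintro ⟨r, s⟩ h1 ⟨r', s'⟩ h2 h
      simp at h1 h2 h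
      have h' : r + s * y = r' + s' * y := by exact_mod_cast h
      have h3 : r < y := by omega
      have h4 : r' < y := by omega
      have e1 : (r + s * y) % y = r := by rw [Nat.add_mul_mod_self_right, Nat.mod_eq_of_lt h3]
      have e2 : (r' + s' * y) % y = r' := by rw [Nat.add_mul_mod_self_right, Nat.mod_eq_of_lt h4]
      have hr : r = r' := by rw [← e1, ← e2, h']
      subst hr
      have : s = s' := Nat.eq_of_mul_eq_mul_right (by omega : 0 < y) (by omega)
      simp [this]
  apply hne
  apply eq_zero_of_natDegree_lt_card_of_eval_eq_zero' _ pts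
  · intro x hx
    simp only [pts, Finset.mem_image, Finset.mem_product, Finset.mem_range] at hx
    obtain ⟨⟨r, s⟩, ⟨hr, hs⟩, rfl⟩ := hx
    simp only at hr hs ⊢
    rw [← coe_evalRingHom, RingHom.map_det]
    apply Matrix.exists_mulVec_eq_zero_iff.mp
    refine ⟨fun j => (a ^ r * b ^ s) ^ (e j : ℕ), ?_, ?_⟩
    · intro h
      have := congrFun h (e.symm ⟨l0, hl0F⟩)
      simp only [Pi.zero_apply] at this
      exact pow_ne_zero _ (mul_ne_zero (pow_ne_zero _ (by linarith)) (pow_ne_zero _ hb)) this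
    · ext i
      have hi := i.2
      have h := hv (r + i) (by omega) s hs
      have h2 : ∑ l ∈ F, (P l).eval (((r + i : ℕ) : ℚ) + s * y) * (a ^ (r + (i : ℕ)) * b ^ s) ^ l = 0 := by
        rw [← h, hF]
        apply Finset.sum_filter_of_ne
        intro l _ hl h0
        apply hl
        rw [h0]; simp
      rw [← Finset.sum_coe_sort, ← Equiv.sum_comp e] at h2
      simp only [Matrix.mulVec, dotProduct, Pi.zero_apply]
      rw [← h2]
      apply Finset.sum_congr rfl
      intro j _
      simp only [M, RingHom.mapMatrix_apply, Matrix.map_apply, Matrix.of_apply, coe_evalRingHom, eval_mul, eval_C, taylor_eval]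
      rw [show (r : ℚ) + s * y + (i : ℕ) = ((r + i : ℕ) : ℚ) + s * y by push_cast; ring]
      ring
  · rw [hcard]
    have h1 : ∑ j, (P (e j)).natDegree < K * L := by
      have hK : 0 < K := lt_of_le_of_lt (Nat.zero_le _) (hdeg l0 hl0)
      have : ∑ j, (P (e j)).natDegree ≤ ∑ j : Fin t, (K - 1) := by
        apply Finset.sum_le_sum
        intro j _
        have := hdeg _ (he j).1
        omega
      simp at this
      have h3 : t * (K - 1) ≤ L * (K - 1) := Nat.mul_le_mul_right _ htL
      have h4 : L * (K - 1) < L * K := Nat.mul_lt_mul_of_pos_left (by omega) (by omega)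
      rw [mul_comm K L]
      omega
    omega

lemma exists_minor {ι κ : Type} [Fintype ι] [DecidableEq ι] [Fintype κ]
    (B : Matrix ι κ ℚ)
    (h : ∀ c : ι → ℚ, (∀ j, ∑ i, c i * B i j = 0) → c = 0) :
    ∃ f : ι → κ, Function.Injective f ∧ (B.submatrix id f).det ≠ 0 := by
  have hspan : Submodule.span ℚ (Set.range B.col) = ⊤ := by
    by_contra hne
    obtain ⟨φ, hφ0, hφ⟩ := Submodule.exists_le_ker_of_lt_top _ (lt_top_iff_ne_top.mpr hne)
    apply hφ0
    have hc := h (fun i => φ (Pi.single i 1)) (by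
      intro j
      have h1 : φ (B.col j) = 0 := hφ (Submodule.subset_span ⟨j, rfl⟩)
      rw [← h1, LinearMap.pi_apply_eq_sum_univ φ (B.col j)]
      apply Finset.sum_congr rfl
      intro i _
      rw [smul_eq_mul, mul_comm]
      congr 2
      ext k
      simp [Pi.single_apply, eq_comm])
    apply LinearMap.pi_ext'
    intro i
    ext
    simpa using congrFun hc i
  obtain ⟨κ', a, ha, hsp, hli⟩ := exists_linearIndependent' ℚ B.col
  rw [hspan] at hsp
  let bas := Module.Basis.mk hli hsp.ge
  let eqv := bas.indexEquiv (Pi.basisFun ℚ ι)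
  refine ⟨a ∘ eqv.symm, ha.comp eqv.symm.injective, ?_⟩
  have : LinearIndependent ℚ (B.submatrix id (a ∘ eqv.symm)).col := by
    exact hli.comp eqv.symm eqv.symm.injective
  rw [Matrix.linearIndependent_cols_iff_isUnit, Matrix.isUnit_iff_isUnit_det] at this
  exact this.ne_zero

/-- entries of the interpolation matrix -/
def ent (a b : ℤ) (y k l r s : ℕ) : ℤ := ((r + s * y).choose k : ℤ) * (a ^ r * b ^ s) ^ l

lemma binom_indep (K : ℕ) (c : ℕ → ℚ)
    (h : ∀ x : ℕ, ∑ k ∈ Finset.range K, c k * (x.choose k : ℚ) = 0) : ∀ k < K, c k = 0 := by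
  intro k
  induction k using Nat.strong_induction_on with
  | _ k ih =>
    intro hk
    have := h k
    rw [Finset.sum_eq_single k] at this
    · simpa using this
    · intro j hj hne
      rcases lt_or_gt_of_ne hne with h1 | h1
      · rw [ih j h1 (by simpa using hj), zero_mul]
      · rw [Nat.choose_eq_zero_of_lt h1]; simp
    · intro hk'
      simp at hk'; omega

open Polynomial in
lemma nonvanish (a b : ℤ) (ha : 1 < a) (hb : b ≠ 0) (K L T y : ℕ) (hK : 0 < K)
    (hT : K * L ≤ T * T) (hy : T ≤ y) :
    ∃ f : Fin K × Fin L → Fin (T + L) × Fin T, Function.Injective f ∧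
      (Matrix.of fun i j : Fin K × Fin L => ent a b y i.1 i.2 (f j).1 (f j).2).det ≠ 0 := by
  let B : Matrix (Fin K × Fin L) (Fin (T + L) × Fin T) ℚ :=
    Matrix.of fun i j => (ent a b y i.1 i.2 j.1 j.2 : ℚ)
  obtain ⟨f, hf, hdet⟩ := exists_minor B (by
    intro c hc
    let c' : ℕ → ℕ → ℚ := fun k l => if h : k < K ∧ l < L then c (⟨k, h.1⟩, ⟨l, h.2⟩) else 0
    let P : ℕ → ℚ[X] := fun l =>
      ∑ k ∈ Finset.range K, C (c' k l / (k.factorial : ℚ)) * descPochhammer ℚ k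
    have hPe : ∀ l (x : ℕ), (P l).eval (x : ℚ) = ∑ k ∈ Finset.range K, c' k l * (x.choose k : ℚ) := by
      intro l x
      simp only [P, eval_finsetSum, eval_mul, eval_C]
      apply Finset.sum_congr rfl
      intro k _
      rw [descPochhammer_eval_eq_descFactorial, Nat.descFactorial_eq_factorial_mul_choose]
      push_cast
      have : (k.factorial : ℚ) ≠ 0 := by positivity
      field_simp
    have hz := zero_lemma (a : ℚ) (b : ℚ) (by exact_mod_cast ha) (by exact_mod_cast hb) K L T y hT hy P
      (by
        intro l _
        have : (P l).natDegree ≤ K - 1 := by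
          apply natDegree_sum_le_of_forall_le
          intro k hk
          refine (natDegree_C_mul_le _ _).trans ?_
          rw [descPochhammer_natDegree]
          simp at hk; omega
        omega)
      (by
        intro r hr s hs
        have h1 := hc (⟨r, hr⟩, ⟨s, hs⟩)
        rw [Fintype.sum_prod_type_right] at h1
        rw [← h1, Finset.sum_range]
        apply Finset.sum_congr rfl
        intro l _
        have := hPe l (r + s * y)
        push_cast at this
        rw [this, Finset.sum_range, Finset.sum_mul]
        apply Finset.sum_congr rfl
        intro k _
        simp [c', B, ent, mul_assoc])
    ext ⟨k, l⟩
    have h2 := binom_indep K (fun k => c' k l) (by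
      intro x
      rw [← hPe, hz l l.2]; simp) k k.2
    simpa [c'] using h2)
  refine ⟨f, hf, ?_⟩
  intro h0
  apply hdet
  have : B.submatrix id f = (Int.castRingHom ℚ).mapMatrix
      (Matrix.of fun i j : Fin K × Fin L => ent a b y i.1 i.2 (f j).1 (f j).2) := by
    ext i j
    simp [B]
  rw [this, ← RingHom.map_det, h0, map_zero]

lemma sum_k (K L : ℕ) (g : ℕ → ℕ) :
    ∑ i : Fin K × Fin L, g i.1 = L * ∑ k ∈ Finset.range K, g k := by
  rw [Fintype.sum_prod_type_right, Finset.sum_range]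
  simp

lemma sum_l (K L : ℕ) (g : ℕ → ℕ) :
    ∑ i : Fin K × Fin L, g i.2 = K * ∑ k ∈ Finset.range L, g k := by
  rw [Fintype.sum_prod_type, Finset.sum_range]
  simp

lemma divis (a b q : ℤ) (z K L y R S : ℕ) (hq : q ∣ a - 1) (hab : q ^ z ∣ a ^ y - b)
    (hz : K * L ≤ z) (f : Fin K × Fin L → Fin R × Fin S) :
    q ^ (∑ j ∈ Finset.range (K * L), j) ∣ q ^ (L * ∑ k ∈ Finset.range K, k) *
      (Matrix.of fun i j : Fin K × Fin L => ent a b y i.1 i.2 (f j).1 (f j).2).det := by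
  have e1 : q ^ (L * ∑ k ∈ Finset.range K, k) = ∏ i : Fin K × Fin L, q ^ (i.1 : ℕ) := by
    rw [Finset.prod_pow_eq_pow_sum, sum_k K L (fun k => k)]
  rw [e1, ← Matrix.det_mul_column]
  set N := K * L with hN
  have hfl : ∀ l : ℕ, ∃ t, a ^ l = 1 + q * t := by
    intro l
    obtain ⟨t, ht⟩ := hq.trans (sub_one_dvd_pow_sub_one a l)
    exact ⟨t, by linarith⟩
  choose t ht using hfl
  have hexp : ∀ (k l r s : ℕ), ∃ h, q ^ k * ent a b y k l r s =
      ∑ m ∈ Finset.range (N - 1), (((a ^ l) ^ k * (m.choose k : ℤ) * (t l) ^ (m - k)) * q ^ m *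
        ((r + s * y).choose m : ℤ)) + q ^ (N - 1) * h := by
    intro k l r s
    set x := r + s * y with hx
    have hc : q ^ (N - 1) ∣ (a ^ r * b ^ s) ^ l - (a ^ l) ^ x := by
      have h1 : q ^ (N - 1) ∣ a ^ y - b := (pow_dvd_pow q (by omega)).trans hab
      have h2 : (a ^ r * b ^ s) ^ l ≡ (a ^ r * (a ^ y) ^ s) ^ l [ZMOD q ^ (N - 1)] := by
        apply Int.ModEq.pow
        apply Int.ModEq.mul_left
        apply Int.ModEq.pow
        exact (Int.modEq_iff_dvd.mpr h1)
      have h3 : (a ^ r * (a ^ y) ^ s) ^ l = (a ^ l) ^ x := by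
        rw [hx, ← pow_mul, ← pow_add, ← pow_mul, ← pow_mul]
        congr 1; ring
      rw [h3] at h2
      exact h2.symm.dvd
    obtain ⟨h1, hh1⟩ := hc
    have h2 := row_exp q (t l) (a ^ l) (ht l) k x
    set G : ℕ → ℤ := fun m => ((a ^ l) ^ k * (m.choose k : ℤ) * (t l) ^ (m - k)) * q ^ m *
        (x.choose m : ℤ) with hG
    have h3 : q ^ (N - 1) ∣ ∑ m ∈ Finset.range (x + 1), G m - ∑ m ∈ Finset.range (N - 1), G m := by
      have hz0 : ∀ m, x + 1 ≤ m → G m = 0 := by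
        intro m hm
        simp [hG, Nat.choose_eq_zero_of_lt (show x < m by omega)]
      rcases le_total (N - 1) (x + 1) with hle | hle
      · rw [Finset.range_eq_Ico, Finset.range_eq_Ico, ← Finset.sum_Ico_consecutive G (Nat.zero_le _) hle,
          add_sub_cancel_left]
        apply Finset.dvd_sum
        intro m hm
        rw [Finset.mem_Ico] at hm
        exact ((pow_dvd_pow q hm.1).mul_left _).mul_right _
      · rw [Finset.range_eq_Ico, Finset.range_eq_Ico, ← Finset.sum_Ico_consecutive G (Nat.zero_le _) hle,
          Finset.sum_eq_zero (s := Finset.Ico (x + 1) (N - 1))]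
        · simp
        · intro m hm
          simp at hm
          exact hz0 m hm.1
    obtain ⟨h4, hh4⟩ := h3
    refine ⟨h4 + q ^ k * (x.choose k : ℤ) * h1, ?_⟩
    simp only [ent, ← hx]
    linear_combination h2 + hh4 + q ^ k * (x.choose k : ℤ) * hh1
  choose h hh using hexp
  apply det_dvd N (by simp [hN]) _ q
    (fun i m => (a ^ (i.2 : ℕ)) ^ (i.1 : ℕ) * (m.choose (i.1 : ℕ) : ℤ) * (t i.2) ^ (m - (i.1 : ℕ)))
    (fun m j => (((f j).1 + (f j).2 * y : ℕ).choose m : ℤ))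
    (fun i j => h i.1 i.2 (f j).1 (f j).2)
  intro i j
  simp only [Matrix.of_apply]
  exact hh i.1 i.2 (f j).1 (f j).2

lemma two_sum (n : ℕ) : 2 * ∑ j ∈ Finset.range n, j + n = n ^ 2 := by
  induction n with
  | zero => simp
  | succ n ih => rw [Finset.sum_range_succ]; nlinarith

lemma sum_sq (n : ℕ) : 3 * ∑ k ∈ Finset.range n, k ^ 2 ≤ n ^ 3 := by
  induction n with
  | zero => simp
  | succ n ih => 
    rw [Finset.sum_range_succ]
    have : (n + 1) ^ 3 = n ^ 3 + 3 * n ^ 2 + 3 * n + 1 := by ring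
    omega

lemma sum_lr (ι : Type) [Fintype ι] (l r : ι → ℕ) (L R A B : ℕ) (hL : 0 < L) (hR : 0 < R)
    (h1 : 3 * ∑ i, l i ^ 2 ≤ A * L ^ 2) (h2 : 3 * ∑ i, r i ^ 2 ≤ B * R ^ 2) :
    6 * ∑ i, l i * r i ≤ R * L * (A + B) := by
  have h3 : 2 * R * L * ∑ i, l i * r i ≤ R ^ 2 * ∑ i, l i ^ 2 + L ^ 2 * ∑ i, r i ^ 2 := by
    rw [Finset.mul_sum, Finset.mul_sum, Finset.mul_sum, ← Finset.sum_add_distrib]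
    apply Finset.sum_le_sum
    intro i _
    zify
    nlinarith [sq_nonneg ((R : ℤ) * l i - L * r i)]
  have h4 : (R * L) * (6 * ∑ i, l i * r i) ≤ (R * L) * (R * L * (A + B)) := by
    have := Nat.mul_le_mul_left (R ^ 2) h1
    have := Nat.mul_le_mul_left (L ^ 2) h2
    nlinarith
  exact Nat.le_of_mul_le_mul_left h4 (by positivity)

lemma choose_prod_bound (K L T y : ℕ) (hTK : 7 * T ≤ K) (x : Fin K × Fin L → ℕ)
    (hx : ∀ i, x i ≤ T * y) :
    ∏ i : Fin K × Fin L, (x i).choose i.1 ≤ y ^ (L * ∑ k ∈ Finset.range K, k) := by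
  set s := ∑ k ∈ Finset.range K, k with hs
  have h1 : (∏ i : Fin K × Fin L, (i.1 : ℕ).factorial) * ∏ i : Fin K × Fin L, (x i).choose i.1
      ≤ (T * y) ^ (L * s) := by
    rw [← Finset.prod_mul_distrib, hs, ← sum_k K L (fun k => k), ← Finset.prod_pow_eq_pow_sum]
    apply Finset.prod_le_prod'
    intro i _
    rw [← Nat.descFactorial_eq_factorial_mul_choose]
    exact (Nat.descFactorial_le_pow _ _).trans (Nat.pow_le_pow_left (hx i) _)
  have h2 : ∏ i : Fin K × Fin L, (i.1 : ℕ).factorial = (∏ k ∈ Finset.range K, k.factorial) ^ L := by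
    rw [Fintype.prod_prod_type_right, Finset.prod_range]
    simp
  have h3 : T ^ s ≤ ∏ k ∈ Finset.range K, k.factorial := by
    have := superfact K
    rw [← hs] at this
    have h5 : (7 * T) ^ s ≤ K ^ s := Nat.pow_le_pow_left hTK s
    rw [mul_pow] at h5
    exact Nat.le_of_mul_le_mul_left (h5.trans this) (by positivity)
  have hpos : 0 < (∏ k ∈ Finset.range K, k.factorial) ^ L :=
    pow_pos (Finset.prod_pos (fun k _ => Nat.factorial_pos k)) L
  rw [h2] at h1
  refine Nat.le_of_mul_le_mul_left (h1.trans ?_) hpos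
  rw [mul_pow]
  apply Nat.mul_le_mul_right
  rw [mul_comm L s, pow_mul]
  exact Nat.pow_le_pow_left h3 L

lemma upper (a b : ℤ) (w K L T y E : ℕ) (hw : 0 < w) (ha : |a| ≤ (w : ℤ) ^ 2) (hb : |b| ≤ (w : ℤ) ^ 2)
    (hTK : 7 * T ≤ K) (hTy : T + L ≤ y) (hL : 0 < L) (hT : 0 < T)
    (f : Fin K × Fin L → Fin (T + L) × Fin T) (hf : Function.Injective f)
    (hE : L * (2 * T + L) * (K * L + (T + L) * T) ≤ 6 * E) :
    |(Matrix.of fun i j : Fin K × Fin L => ent a b y i.1 i.2 (f j).1 (f j).2).det| ≤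
      ((K * L).factorial * y ^ (L * ∑ k ∈ Finset.range K, k) * w ^ (2 * E) : ℕ) := by
  have hexpsum : ∀ σ : Equiv.Perm (Fin K × Fin L),
      ∑ i, ((σ i).2 : ℕ) * (((f i).1 : ℕ) + ((f i).2 : ℕ)) ≤ E := by
    intro σ
    have hl : 3 * ∑ i, ((σ i).2 : ℕ) ^ 2 ≤ (K * L) * L ^ 2 := by
      rw [Equiv.sum_comp σ (fun i => (i.2 : ℕ) ^ 2), sum_l K L (fun l => l ^ 2)]
      have := sum_sq L
      nlinarith
    have hr : 3 * ∑ i, ((f i).1 : ℕ) ^ 2 ≤ ((T + L) * T) * (T + L) ^ 2 := by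
      have h1 : ∑ i, ((f i).1 : ℕ) ^ 2 ≤ ∑ j : Fin (T + L) × Fin T, (j.1 : ℕ) ^ 2 := by
        rw [← Finset.sum_image (s := Finset.univ) (g := f) (f := fun j => (j.1 : ℕ) ^ 2)
          (fun a _ b _ h => hf h)]
        exact Finset.sum_le_sum_of_subset (Finset.subset_univ _)
      rw [sum_k (T + L) T (fun k => k ^ 2)] at h1
      have := sum_sq (T + L)
      nlinarith
    have hs : 3 * ∑ i, ((f i).2 : ℕ) ^ 2 ≤ ((T + L) * T) * T ^ 2 := by
      have h1 : ∑ i, ((f i).2 : ℕ) ^ 2 ≤ ∑ j : Fin (T + L) × Fin T, (j.2 : ℕ) ^ 2 := by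
        rw [← Finset.sum_image (s := Finset.univ) (g := f) (f := fun j => (j.2 : ℕ) ^ 2)
          (fun a _ b _ h => hf h)]
        exact Finset.sum_le_sum_of_subset (Finset.subset_univ _)
      rw [sum_l (T + L) T (fun k => k ^ 2)] at h1
      have := sum_sq T
      nlinarith
    have e1 := sum_lr _ _ _ L (T + L) _ _ hL (by omega) hl hr
    have e2 := sum_lr _ _ _ L T _ _ hL hT hl hs
    simp only [mul_add, Finset.sum_add_distrib] at *
    nlinarith
  have hterm : ∀ σ : Equiv.Perm (Fin K × Fin L),
      ∏ i, |ent a b y (σ i).1 (σ i).2 (f i).1 (f i).2| ≤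
        ((y ^ (L * ∑ k ∈ Finset.range K, k) * w ^ (2 * E) : ℕ) : ℤ) := by
    intro σ
    have h1 : ∀ i, |ent a b y (σ i).1 (σ i).2 (f i).1 (f i).2| ≤
        ((((f i).1 + (f i).2 * y : ℕ).choose (σ i).1 : ℕ) : ℤ) *
          (((w ^ 2) ^ (((σ i).2 : ℕ) * (((f i).1 : ℕ) + ((f i).2 : ℕ))) : ℕ) : ℤ) := by
      intro i
      rw [ent, abs_mul, Nat.abs_cast]
      gcongr
      rw [abs_pow, abs_mul, abs_pow, abs_pow, mul_comm ((σ i).2 : ℕ), pow_mul, pow_add]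
      push_cast
      gcongr
    refine (Finset.prod_le_prod (fun i _ => abs_nonneg _) (fun i _ => h1 i)).trans ?_
    rw [Finset.prod_mul_distrib]
    have h2 : ∏ i, ((f i).1 + (f i).2 * y : ℕ).choose (σ i).1 ≤
        y ^ (L * ∑ k ∈ Finset.range K, k) := by
      have := choose_prod_bound K L T y hTK
        (fun i => ((f (σ.symm i)).1 + (f (σ.symm i)).2 * y : ℕ)) (by
          intro i
          have e1 := (f (σ.symm i)).1.2
          have e2 := (f (σ.symm i)).2.2
          have e3 : ((f (σ.symm i)).2 : ℕ) + 1 ≤ T := e2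
          have := Nat.mul_le_mul_right y e3
          nlinarith)
      rw [← Equiv.prod_comp σ] at this
      simpa using this
    have h3 : ∏ i, (w ^ 2) ^ (((σ i).2 : ℕ) * (((f i).1 : ℕ) + ((f i).2 : ℕ))) ≤ w ^ (2 * E) := by
      rw [Finset.prod_pow_eq_pow_sum, pow_mul]
      exact Nat.pow_le_pow_right (by positivity) (hexpsum σ)
    exact_mod_cast Nat.mul_le_mul h2 h3
  rw [Matrix.det_apply']
  refine (Finset.abs_sum_le_sum_abs _ _).trans ?_
  have h5 : ∀ σ ∈ (Finset.univ : Finset (Equiv.Perm (Fin K × Fin L))),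
      |((Equiv.Perm.sign σ : ℤ)) * ∏ i, (Matrix.of fun i j : Fin K × Fin L => ent a b y i.1 i.2 (f j).1 (f j).2) (σ i) i|
      ≤ ((y ^ (L * ∑ k ∈ Finset.range K, k) * w ^ (2 * E) : ℕ) : ℤ) := by
    intro σ _
    rw [abs_mul, Int.isUnit_iff_abs_eq.mp (Equiv.Perm.sign σ).isUnit, one_mul, Finset.abs_prod]
    exact hterm σ
  refine (Finset.sum_le_card_nsmul _ _ _ h5).trans ?_
  rw [Finset.card_univ, Fintype.card_perm]
  simp [mul_assoc]

lemma core (w y z D : ℕ) (a b : ℤ) (hw : 2 ≤ w) (ha : 1 < a) (ha2 : a ≤ (w : ℤ) ^ 2)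
    (hb : b ≠ 0) (hb2 : |b| ≤ (w : ℤ) ^ 2) (hq : (w : ℤ) ∣ a - 1) (hab : (w : ℤ) ^ z ∣ a ^ y - b)
    (hD : 2 ≤ D) (hyD : y ≤ w ^ (D - 1)) (hyN : 196 * D ^ 2 ≤ y) (hz : y ≤ z) : False := by
  have hKL : (98 * D) * (2 * D) = 196 * D ^ 2 := by ring
  have h16 : 14 * D + 2 * D ≤ y := by nlinarith
  obtain ⟨f, hf, hdet⟩ := nonvanish a b ha hb (98 * D) (2 * D) (14 * D) y (by omega)
    (by nlinarith) (by omega)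
  have hdiv := divis a b w z (98 * D) (2 * D) y _ _ hq hab (by omega) f
  have hup := upper a b w (98 * D) (2 * D) (14 * D) y (4200 * D ^ 4) (by omega)
    (by rw [abs_of_pos (by omega)]; exact ha2) hb2 (by omega) h16 (by omega) (by omega) f hf
    (by apply le_of_eq; ring)
  set Δ := (Matrix.of fun i j : Fin (98 * D) × Fin (2 * D) =>
    ent a b y i.1 i.2 (f j).1 (f j).2).det with hΔ
  clear_value Δ
  rw [hKL] at hdiv hup
  have hs1 := two_sum (196 * D ^ 2)
  have hs2 := two_sum (98 * D)
  set s1 := ∑ j ∈ Finset.range (196 * D ^ 2), j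
  set s2 := ∑ j ∈ Finset.range (98 * D), j
  clear_value s1 s2
  have hlow : w ^ s1 ≤ w ^ (2 * D * s2) * Δ.natAbs := by
    have h1 := Int.natAbs_dvd_natAbs.mpr hdiv
    rw [Int.natAbs_mul, Int.natAbs_pow, Int.natAbs_pow, Int.natAbs_natCast] at h1
    apply Nat.le_of_dvd _ h1
    have := Int.natAbs_pos.mpr hdet
    positivity
  have hupN : Δ.natAbs ≤ (196 * D ^ 2).factorial * y ^ (2 * D * s2) * w ^ (2 * (4200 * D ^ 4)) := by
    zify
    push_cast at hup
    exact hup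
  have hN : 196 * D ^ 2 ≤ w ^ (6 * D ^ 2) := by
    have h1 : 6 * D ^ 2 < 2 ^ (6 * D ^ 2) := Nat.lt_two_pow_self
    have h2 : 196 * D ^ 2 ≤ 2 ^ (6 * D ^ 2) := by
      have h3 : D ^ 2 < 2 ^ (D ^ 2) := Nat.lt_two_pow_self
      have h4 : 2 ^ (6 * D ^ 2) = 2 ^ (5 * D ^ 2) * 2 ^ (D ^ 2) := by rw [← pow_add]; congr 1; ring
      have h5 : 2 ^ 20 ≤ 2 ^ (5 * D ^ 2) := Nat.pow_le_pow_right (by norm_num) (by nlinarith)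
      rw [h4]
      exact Nat.mul_le_mul (le_trans (by norm_num) h5) h3.le
    exact h2.trans (Nat.pow_le_pow_left hw _)
  have hfac : (196 * D ^ 2).factorial ≤ w ^ (6 * D ^ 2 * (196 * D ^ 2)) := by
    refine (Nat.factorial_le_pow _).trans ?_
    rw [pow_mul w (6 * D ^ 2) (196 * D ^ 2)]
    exact Nat.pow_le_pow_left hN _
  have hyp : y ^ (2 * D * s2) ≤ w ^ ((D - 1) * (2 * D * s2)) := by
    rw [pow_mul w]
    exact Nat.pow_le_pow_left hyD _
  have htot : w ^ s1 ≤ w ^ (2 * D * s2 + (6 * D ^ 2 * (196 * D ^ 2) + (D - 1) * (2 * D * s2)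
      + 2 * (4200 * D ^ 4))) := by
    rw [pow_add, pow_add, pow_add]
    refine hlow.trans (Nat.mul_le_mul_left _ (hupN.trans ?_))
    gcongr
  have hle := (Nat.pow_le_pow_iff_right (by omega)).mp htot
  obtain ⟨d, rfl⟩ : ∃ d, D = d + 1 := ⟨D - 1, by omega⟩
  simp only [Nat.add_sub_cancel] at hle
  -- 2 s1 = N^2 - N, 2 D s2 * D
  have h7 : 2 * (d + 1) * s2 + d * (2 * (d + 1) * s2) = (d + 1) ^ 2 * (2 * s2) := by ring
  have h8 : (d + 1) ^ 2 * (2 * s2) + 98 * (d + 1) ^ 3 = (98 ^ 2) * (d + 1) ^ 4 := by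
    have : (d + 1) ^ 2 * (2 * s2 + 98 * (d + 1)) = (d + 1) ^ 2 * (98 * (d + 1)) ^ 2 := by rw [hs2]
    nlinarith
  have h9 : 6 * (d + 1) ^ 2 * (196 * (d + 1) ^ 2) = 1176 * (d + 1) ^ 4 := by ring
  have h10 : (196 * (d + 1) ^ 2) ^ 2 = 38416 * (d + 1) ^ 4 := by ring
  rw [h10] at hs1
  have h11 : (d + 1) ^ 2 ≤ (d + 1) ^ 3 := Nat.pow_le_pow_right (by omega) (by omega)
  have h12 : 0 < (d + 1) ^ 4 := by positivity
  omega

lemma growth (t : ℕ) : 196 * (t + 6) ^ 2 ≤ 11 ^ (t + 4) := by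
  induction t with
  | zero => norm_num
  | succ t ih =>
    rw [show t + 1 + 4 = (t + 4) + 1 by ring, pow_succ 11]
    have h : 196 * (t + 1 + 6) ^ 2 ≤ 196 * (t + 6) ^ 2 * 11 := by
      have h1 : (t + 1 + 6) ^ 2 ≤ (2 * (t + 6)) ^ 2 := Nat.pow_le_pow_left (by omega) 2
      rw [mul_pow] at h1
      omega
    exact h.trans (Nat.mul_le_mul_right _ ih)

set_option maxHeartbeats 1000000 in
theorem stmt_9 (p n : ℕ) (hp : p.Prime) (hp3 : 3 < p) (hp4 : p % 4 = 3)
    (hn : 0 < n)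
    (u v w : ℕ) (hu : u = 5 * p * n ^ 2 - 1) (hv : v = p * (p - 5) * n ^ 2 + 1)
    (hw : w = p * n)
    (y z : ℕ) (hy : 3 ≤ y) (hz : 0 < z)
    (heq : w ^ z - v ^ y = u) :
    (y : ℝ) < 2521 * Real.log (p * n) := by
  by_contra hcon
  rw [not_lt] at hcon
  have hp7 : 7 ≤ p := by omega
  obtain ⟨m, rfl⟩ : ∃ m, p = m + 5 := ⟨p - 5, by omega⟩
  simp only [Nat.add_sub_cancel] at hv
  have hn2 : 0 < n ^ 2 := by positivity
  have hpn : 7 ≤ (m + 5) * n ^ 2 := by nlinarith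
  have hu1 : u + 1 = 5 * (m + 5) * n ^ 2 := by
    have : 5 * (m + 5) * n ^ 2 = 5 * ((m + 5) * n ^ 2) := by ring
    omega
  have hupos : 0 < u := by
    have : 5 * (m + 5) * n ^ 2 = 5 * ((m + 5) * n ^ 2) := by ring
    omega
  have heq' : w ^ z = v ^ y + u := by omega
  have huv : u + v = w ^ 2 := by
    have : u + 1 + v = w ^ 2 + 1 := by rw [hu1, hv, hw]; ring
    omega
  -- excluding w = 7
  have hw11 : 11 ≤ w := by
    by_contra hlt
    have hmn : m = 2 ∧ n = 1 := by
      have h2 : 2 ≤ m := by omega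
      have hn1 : n = 1 := by
        by_contra hne
        have : 2 ≤ n := by omega
        nlinarith
      subst hn1
      refine ⟨?_, rfl⟩
      omega
    obtain ⟨rfl, rfl⟩ := hmn
    norm_num at hu1 hv hw
    obtain rfl : u = 34 := by omega
    subst hv hw
    obtain ⟨t, rfl⟩ : ∃ t, y = t + 2 := ⟨y - 2, by omega⟩
    have h1 : 7 ^ z % 25 = 9 := by
      rw [heq', pow_add, Nat.add_mod, Nat.mul_mod]
      norm_num
    have h2 : ∀ z, 7 ^ z % 25 = 1 ∨ 7 ^ z % 25 = 7 ∨ 7 ^ z % 25 = 24 ∨ 7 ^ z % 25 = 18 := by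
      intro z
      induction z with
      | zero => simp
      | succ z ih => rw [pow_succ]; omega
    have := h2 z
    omega
  have hvw : w ≤ v := by
    have h2 : 2 ≤ m := by omega
    rw [hv, hw]
    have : n ≤ n ^ 2 := by nlinarith
    have h3 : (m + 5) * n ≤ (m + 5) * n ^ 2 := Nat.mul_le_mul_left _ this
    have h4 : (m + 5) * n ^ 2 * 1 ≤ (m + 5) * n ^ 2 * m := Nat.mul_le_mul_left _ (by omega)
    nlinarith
  have hyz : y ≤ z := by
    have h1 : w ^ y ≤ w ^ z := by
      rw [heq']
      exact (Nat.pow_le_pow_left hvw y).trans (Nat.le_add_right _ _)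
    exact (Nat.pow_le_pow_iff_right (by omega)).mp h1
  have hy5042 : 5042 ≤ y := by
    have h1 : (2 : ℝ) ≤ Real.log ((m + 5 : ℕ) * n) := by
      rw [Real.le_log_iff_exp_le (by positivity)]
      have h2 : ((11 : ℕ) : ℝ) ≤ (w : ℝ) := by exact_mod_cast hw11
      rw [hw] at h2
      push_cast at h2 ⊢
      have h3 : Real.exp 2 ≤ 11 := by
        rw [show (2 : ℝ) = (2 : ℕ) * 1 by norm_num, Real.exp_nat_mul]
        have := Real.exp_one_lt_d9
        have := Real.exp_pos 1
        nlinarith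
      linarith
    have : (5042 : ℝ) ≤ y := by linarith
    exact_mod_cast this
  -- choice of D
  obtain ⟨g, hg⟩ : ∃ g, g = Nat.clog w y := ⟨_, rfl⟩
  have hyg : y ≤ w ^ g := hg ▸ Nat.le_pow_clog (by omega) y
  have hg1 : 1 ≤ g := hg ▸ Nat.clog_pos (by omega) (by omega)
  have hglow : w ^ (g - 1) < y := by
    have := Nat.pow_pred_clog_lt_self (b := w) (by omega) (show 1 < y by omega)
    rw [hg]; simpa using this
  have hN : 196 * (g + 1) ^ 2 ≤ y := by
    rcases Nat.lt_or_ge g 5 with h | h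
    · have : (g + 1) ^ 2 ≤ 5 ^ 2 := Nat.pow_le_pow_left (by omega) 2
      omega
    · obtain ⟨t, rfl⟩ : ∃ t, g = t + 5 := ⟨g - 5, by omega⟩
      have h2 : 11 ^ (t + 4) ≤ w ^ (t + 4) := Nat.pow_le_pow_left hw11 _
      have h3 := growth t
      have h4 : t + 5 - 1 = t + 4 := by omega
      rw [h4] at hglow
      have h5 : t + 5 + 1 = t + 6 := by omega
      rw [h5]
      omega
  have huvZ : (u : ℤ) + v = (w : ℤ) ^ 2 := by exact_mod_cast huv
  have hvZ : (v : ℤ) = (m + 5) * m * n ^ 2 + 1 := by rw [hv]; push_cast; ring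
  have hwZ : (w : ℤ) = (m + 5) * n := by rw [hw]; push_cast; ring
  refine core w y z (g + 1) (v : ℤ) (-(u : ℤ)) (by omega) (by omega) (by omega) (by omega)
    ?_ ?_ ?_ (by omega) (by simpa using hyg) hN hyz
  · rw [abs_neg, Nat.abs_cast]; omega
  · refine ⟨m * n, ?_⟩
    rw [hvZ, hwZ]; ring
  · refine ⟨1, ?_⟩
    have : (w : ℤ) ^ z = (v : ℤ) ^ y + u := by exact_mod_cast heq'
    rw [this]; ring
end

section
/- Let p be a prime with p > 3 and p ≡ 3 (mod 4), and let n be a positive integer. Set u = 5pn² − 1, v = p(p−5)n² + 1 and w = pn. If positive integers y, z with y ≥ 3 satisfy w^z − v^y = u, then y > n² − 2. -/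
theorem aux_pow (a M y : ℕ) : ∃ c, (a * M + 1) ^ y = 1 + y * a * M + M ^ 2 * c := by
  induction y with
  | zero => exact ⟨0, by simp⟩
  | succ k ih =>
    obtain ⟨c, hc⟩ := ih
    refine ⟨k * a * a + c * (a * M + 1), ?_⟩
    rw [pow_succ, hc]
    push_cast
    ring

theorem stmt_10 (p n : ℕ) (hp : p.Prime) (hp3 : 3 < p) (hp4 : p % 4 = 3)
    (hn : 0 < n)
    (u v w : ℕ) (hu : u = 5 * p * n ^ 2 - 1) (hv : v = p * (p - 5) * n ^ 2 + 1)
    (hw : w = p * n)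
    (y z : ℕ) (hy : 3 ≤ y) (hz : 0 < z)
    (heq : w ^ z - v ^ y = u) :
    (n : ℤ) ^ 2 - 2 < (y : ℤ) := by
  obtain ⟨q, rfl⟩ : ∃ q, p = q + 5 := ⟨p - 5, by omega⟩
  have hq : 2 ≤ q := by omega
  simp only [Nat.add_sub_cancel] at hv
  obtain ⟨M, hM⟩ : ∃ M, M = (q + 5) * n ^ 2 := ⟨_, rfl⟩
  have hn2 : n ≤ n ^ 2 := Nat.le_self_pow (by norm_num) n
  have hM0 : 0 < M := by rw [hM]; positivity
  have hu' : u = 5 * M - 1 := by rw [hu, hM, mul_assoc]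
  have hv' : v = q * M + 1 := by rw [hv, hM]; ring
  have hwM : w ≤ M := by rw [hw, hM]; gcongr
  have hwv : w ≤ v := by nlinarith
  have h1 : w ^ z = v ^ y + u := by omega
  have hw0 : 0 < w := by rw [hw]; positivity
  have hz4 : 4 ≤ z := by
    by_contra hcon
    have a1 : w ^ z ≤ w ^ 3 := Nat.pow_le_pow_right hw0 (by omega)
    have a2 : w ^ 3 ≤ v ^ 3 := Nat.pow_le_pow_left hwv 3
    have a3 : v ^ 3 ≤ v ^ y := Nat.pow_le_pow_right (by omega) hy
    omega
  obtain ⟨c, hc⟩ := aux_pow q M y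
  have hd : M ^ 2 ∣ w ^ z := by
    refine dvd_trans ?_ (pow_dvd_pow w hz4)
    exact ⟨(q + 5) ^ 2, by rw [hw, hM]; ring⟩
  have h2 : w ^ z = M * (y * q + 5) + M ^ 2 * c := by
    rw [h1, hv', hc, hu']
    have : M * (y * q + 5) = y * q * M + 5 * M := by ring
    omega
  rw [h2] at hd
  have hd2 : M ^ 2 ∣ M * (y * q + 5) := (Nat.dvd_add_left (dvd_mul_right _ _)).1 hd
  rw [sq] at hd2
  have hd3 : M ∣ y * q + 5 := Nat.dvd_of_mul_dvd_mul_left hM0 hd2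
  have hle := Nat.le_of_dvd (by omega) hd3
  rw [hM] at hle
  zify at hle hq hn hn2
  by_contra hcon
  push Not at hcon
  nlinarith
end

section
/- Let p be a prime with p > 3 and p ≡ 3 (mod 4), and let n be a positive integer. Set u = 5pn² − 1, v = p(p−5)n² + 1 and w = pn. If positive integers y, z with y ≥ 2 satisfy w^z − v^y = u, then z < 2y. -/
theorem stmt_12 (p n : ℕ) (hp : p.Prime) (hp3 : 3 < p) (hp4 : p % 4 = 3)
    (hn : 0 < n)
    (u v w : ℕ) (hu : u = 5 * p * n ^ 2 - 1) (hv : v = p * (p - 5) * n ^ 2 + 1)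
    (hw : w = p * n)
    (y z : ℕ) (hy : 2 ≤ y) (hz : 0 < z)
    (heq : w ^ z - v ^ y = u) :
    z < 2 * y := by
  by_contra! hcon
  have hpn : 1 ≤ p * n ^ 2 := Nat.succ_le_of_lt (by positivity)
  have hu' : u + 1 = 5 * (p * n ^ 2) := by
    rw [hu, mul_assoc]; omega
  have hupos : 1 ≤ u := by omega
  have hvpos : 1 ≤ v := by omega
  have huv : u + v = w ^ 2 := by
    obtain ⟨q, rfl⟩ : ∃ q, p = q + 5 := ⟨p - 5, by omega⟩
    simp only [Nat.add_sub_cancel] at hv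
    rw [hw]
    nlinarith
  have hwpos : 0 < w := by rw [hw]; positivity
  have h1 : (u + v) ^ y ≤ w ^ z := by
    rw [huv, ← pow_mul]
    exact Nat.pow_le_pow_right hwpos hcon
  obtain ⟨k, rfl⟩ : ∃ k, y = k + 1 := ⟨y - 1, by omega⟩
  have h2 : v ^ k ≤ (u + v) ^ k := Nat.pow_le_pow_left (by omega) k
  have h3 : 2 ≤ (u + v) ^ k :=
    le_trans (by omega : 2 ≤ u + v) (Nat.le_self_pow (by omega) _)
  have h4 : u * 2 ≤ u * (u + v) ^ k := Nat.mul_le_mul_left _ h3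
  have h5 : v * v ^ k ≤ v * (u + v) ^ k := Nat.mul_le_mul_left _ h2
  have h6 : (u + v) ^ (k + 1) = u * (u + v) ^ k + v * (u + v) ^ k := by ring
  have h7 : v ^ (k + 1) = v * v ^ k := by ring
  omega
end

section
/- Let p be a prime with p > 3 and p ≡ 3 (mod 4), and let n be a positive integer. Set u = 5pn² − 1, v = p(p−5)n² + 1 and w = pn. If positive integers y, z with z ≥ 4 satisfy w^z − v^y = u, then pn² divides 5 + (p−5)y. -/
theorem stmt_14_aux (a y : ℕ) : ∃ k, (a + 1) ^ y = 1 + y * a + a ^ 2 * k := by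
  induction y with
  | zero => exact ⟨0, by simp⟩
  | succ y ih =>
    obtain ⟨k, hk⟩ := ih
    exact ⟨y + k + a * k, by rw [pow_succ, hk]; ring⟩

theorem stmt_14 (p n : ℕ) (hp : p.Prime) (hp3 : 3 < p) (hp4 : p % 4 = 3)
    (hn : 0 < n)
    (u v w : ℕ) (hu : u = 5 * p * n ^ 2 - 1) (hv : v = p * (p - 5) * n ^ 2 + 1)
    (hw : w = p * n)
    (y z : ℕ) (hy : 0 < y) (hz : 4 ≤ z)
    (heq : w ^ z - v ^ y = u) :
    p * n ^ 2 ∣ 5 + (p - 5) * y := by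
  have hA : 0 < p * n ^ 2 := by positivity
  obtain ⟨k, hk⟩ := stmt_14_aux (p * (p - 5) * n ^ 2) y
  rw [← hv] at hk
  obtain ⟨d, rfl⟩ := Nat.exists_eq_add_of_le hz
  have h5 : 5 * p * n ^ 2 = 5 * (p * n ^ 2) := by ring
  have h1 : w ^ (4 + d) + 1 = 5 * (p * n ^ 2) + v ^ y := by omega
  have hm : w ^ (4 + d) = (p * n ^ 2) * ((p * n ^ 2) * (p ^ 2 * w ^ d)) := by
    rw [pow_add, hw]; ring
  rw [hm, hk] at h1
  generalize p - 5 = q at *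
  have h2 : (p * n ^ 2) * (p ^ 2 * w ^ d) = (5 + q * y) + (p * n ^ 2) * (q ^ 2 * k) := by
    apply Nat.eq_of_mul_eq_mul_left hA
    nlinarith [h1]
  exact (Nat.dvd_add_left (Dvd.intro _ rfl)).1 (h2 ▸ Dvd.intro _ rfl)
end

section
/- Let n be a positive integer. If positive integers x, y, z with x odd and z ≥ 4 satisfy (35n² − 1)^x + (14n² + 1)^y = (7n)^z, then n² divides 35x + 14y. -/
theorem aux_binom (m c : ℤ) (k : ℕ) : m ^ 2 ∣ (c * m + 1) ^ k - (1 + k * c * m) := by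
  induction k with
  | zero => simp
  | succ k ih =>
    obtain ⟨d, hd⟩ := ih
    refine ⟨d * (c * m + 1) + k * c ^ 2, ?_⟩
    rw [pow_succ]
    push_cast
    linear_combination (c * m + 1) * hd

theorem stmt_15 (n : ℕ) (hn : 0 < n)
    (x y z : ℕ) (hx : 0 < x) (hxodd : Odd x) (hy : 0 < y) (hz : 4 ≤ z)
    (heq : (35 * n ^ 2 - 1) ^ x + (14 * n ^ 2 + 1) ^ y = (7 * n) ^ z) :
    n ^ 2 ∣ 35 * x + 14 * y := by
  have h1 : 1 ≤ 35 * n ^ 2 := by nlinarith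
  have h : (35 * (n : ℤ) ^ 2 - 1) ^ x + (14 * (n : ℤ) ^ 2 + 1) ^ y = (7 * (n : ℤ)) ^ z := by
    have := congrArg (Nat.cast : ℕ → ℤ) heq
    push_cast [Nat.cast_sub h1] at this
    exact this
  have hneg : (35 * (n : ℤ) ^ 2 - 1) ^ x = -((-35) * (n : ℤ) ^ 2 + 1) ^ x := by
    rw [← hxodd.neg_pow]
    congr 1
    ring
  obtain ⟨a, ha⟩ := aux_binom ((n : ℤ) ^ 2) (-35) x
  obtain ⟨b, hb⟩ := aux_binom ((n : ℤ) ^ 2) 14 y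
  obtain ⟨w, rfl⟩ := Nat.exists_eq_add_of_le hz
  have hn0 : (n : ℤ) ^ 2 ≠ 0 := by positivity
  have key : (n : ℤ) ^ 2 ∣ 35 * x + 14 * y := by
    refine ⟨7 ^ 4 * (7 * (n : ℤ)) ^ w + a - b, ?_⟩
    apply mul_left_cancel₀ hn0
    rw [pow_add, hneg] at h
    linear_combination h + ha - hb
  exact_mod_cast key
end
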